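/- arXiv:math/0112296 — 7 statements merged into one kernel-verified Lean document; each statement's English description precedes it below -/
import Mathlib

section
/- As l → √3·a from below (within the interval (√2·a, √3·a)), the density satisfies a·P₃(l) = (9/5)·(√3 − l/a)⁵ + O((√3 − l/a)⁶); that is, the function l ↦ a·P₃(l) − (9/5)·(√3 − l/a)⁵ is big-O of (√3 − l/a)⁶ as l tends to √3·a from the left. -/
open MeasureTheory Real Set Filter Topology Asymptotics

/-- The density of separations on the range `√2·a ≤ l ≤ √3·a`. -/
noncomputable def P₃ (a l : ℝ) : ℝ :=
  l / a ^ 6 *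
    (8 * a * (l ^ 2 + a ^ 2) * Real.sqrt (l ^ 2 - 2 * a ^ 2)
      - (l ^ 2 + a ^ 2) * (l ^ 2 + 5 * a ^ 2)
      + 2 * π * a ^ 2 * (3 * l ^ 2 - 4 * a * l + 3 * a ^ 2)
      + 24 * a ^ 3 * l * Real.arccos (a ^ 2 / (l ^ 2 - a ^ 2))
      - 24 * a ^ 2 * (l ^ 2 + a ^ 2) * Real.arccos (a / Real.sqrt (l ^ 2 - a ^ 2)))

/-!
In the variable `x = l / a` the density is `a * P₃ a l = x * R x` with `R` independent of `a`.
Three differentiations remove both inverse trigonometric functions: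
`R''' x = -24 x (√(x² - 2) - 1)² / (x² - 1)`. Rationalizing `√(x² - 2) - 1` exhibits a double zero
at `√3` with coefficient `-36√3`. As `R`, `R'` and `R''` vanish at `√3`, integrating three times
gives `R x = -(3√3/5) (x - √3)⁵ + O((x - √3)⁶)`, and the factor `x` contributes `√3`.
-/

section LeadingTerm

/-- The one-term expansion `f x = (x - r) ^ n • c + O((x - r) ^ (n + 1))` as `x → r`.
The coefficient `c` may be zero. -/
def HasLeadingTerm {𝕜 E : Type*} [NormedField 𝕜] [NormedAddCommGroup E] [NormedSpace 𝕜 E]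
    (f : 𝕜 → E) (c : E) (n : ℕ) (r : 𝕜) : Prop :=
  (fun x => f x - (x - r) ^ n • c) =O[𝓝 r] fun x => (x - r) ^ (n + 1)

namespace HasLeadingTerm

section NormedField

variable {𝕜 E : Type*} [NormedField 𝕜] [NormedAddCommGroup E] [NormedSpace 𝕜 E]
  {f g : 𝕜 → E} {c : E} {m n : ℕ} {r : 𝕜}

theorem congr (hf : HasLeadingTerm f c n r) (hfg : f =ᶠ[𝓝 r] g) : HasLeadingTerm g c n r :=
  hf.congr' (hfg.sub .rfl) .rfl

theorem sub_pow (n : ℕ) (r : 𝕜) : HasLeadingTerm (fun x => (x - r) ^ n) 1 n r := by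
  simpa only [HasLeadingTerm, smul_eq_mul, mul_one, sub_self] using isBigO_zero _ _

theorem isBigO (hf : HasLeadingTerm f c n r) : f =O[𝓝 r] fun x => (x - r) ^ n := by
  have hsub : (fun x : 𝕜 => x - r) =O[𝓝 r] fun _ => (1 : 𝕜) :=
    (tendsto_id.sub_const r).isBigO_one 𝕜
  have hpow : (fun x => (x - r) ^ (n + 1)) =O[𝓝 r] fun x => (x - r) ^ n := by
    simpa only [pow_succ, mul_one] using (isBigO_refl (fun x => (x - r) ^ n) _).mul hsub
  have hmain : (fun x => (x - r) ^ n • c) =O[𝓝 r] fun x => (x - r) ^ n := by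
    simpa only [smul_eq_mul, mul_one] using
      (isBigO_refl (fun x => (x - r) ^ n) _).smul (isBigO_const_const c (one_ne_zero (α := 𝕜)) _)
  simpa only [sub_add_cancel] using (hf.trans hpow).add hmain

theorem smul {φ : 𝕜 → 𝕜} {b : 𝕜} (hφ : HasLeadingTerm φ b m r) (hf : HasLeadingTerm f c n r) :
    HasLeadingTerm (fun x => φ x • f x) (b • c) (m + n) r := by
  have hleft : (fun x => (φ x - (x - r) ^ m • b) • f x) =O[𝓝 r]
      fun x => (x - r) ^ (m + n + 1) :=
    (IsBigO.smul hφ hf.isBigO).congr_right fun x => by rw [smul_eq_mul]; ring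
  have hright : (fun x => ((x - r) ^ m • b) • (f x - (x - r) ^ n • c)) =O[𝓝 r]
      fun x => (x - r) ^ (m + n + 1) := by
    have hmain : (fun x => (x - r) ^ m • b) =O[𝓝 r] fun x => (x - r) ^ m := by
      simpa only [smul_eq_mul, mul_comm _ b] using (isBigO_refl _ _).const_mul_left b
    exact (hmain.smul hf).congr_right fun x => by rw [smul_eq_mul]; ring
  refine (hleft.add hright).congr_left fun x => ?_
  simp only [smul_eq_mul]
  module

end NormedField

theorem of_differentiableAt {𝕜 E : Type*} [NontriviallyNormedField 𝕜] [NormedAddCommGroup E]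
    [NormedSpace 𝕜 E] {f : 𝕜 → E} {r : 𝕜} (hf : DifferentiableAt 𝕜 f r) :
    HasLeadingTerm f (f r) 0 r := by
  simpa only [HasLeadingTerm, pow_zero, one_smul, zero_add, pow_one] using hf.isBigO_sub

end HasLeadingTerm

variable {𝕜 E : Type*} [RCLike 𝕜] [NormedAddCommGroup E] [NormedSpace 𝕜 E]
  {f f' : 𝕜 → E} {c d : E} {n : ℕ} {r : 𝕜}

theorem isBigO_sub_pow_succ_of_hasDerivAt (hf : ∀ᶠ x in 𝓝 r, HasDerivAt f (f' x) x)
    (hf' : f' =O[𝓝 r] fun x => (x - r) ^ n) :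
    (fun x => f x - f r) =O[𝓝 r] fun x => (x - r) ^ (n + 1) := by
  obtain ⟨C, hC, hbound⟩ := hf'.exists_pos
  obtain ⟨ε, hε, hball⟩ := Metric.eventually_nhds_iff_ball.1 (hf.and hbound.bound)
  refine IsBigO.of_bound C ?_
  filter_upwards [Metric.ball_mem_nhds r hε] with x hx
  have hsub : Metric.closedBall r ‖x - r‖ ⊆ Metric.ball r ε :=
    Metric.closedBall_subset_ball (by rwa [← dist_eq_norm])
  have hderiv_le : ∀ y ∈ Metric.closedBall r ‖x - r‖, ‖f' y‖ ≤ C * ‖x - r‖ ^ n := fun y hy => by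
    have hyr : ‖y - r‖ ≤ ‖x - r‖ := by rwa [← dist_eq_norm]
    calc ‖f' y‖ ≤ C * ‖(y - r) ^ n‖ := (hball y (hsub hy)).2
      _ ≤ C * ‖x - r‖ ^ n := by rw [norm_pow]; gcongr
  calc ‖f x - f r‖ ≤ C * ‖x - r‖ ^ n * ‖x - r‖ :=
        (convex_closedBall r ‖x - r‖).norm_image_sub_le_of_norm_hasDerivWithin_le
          (fun y hy => (hball y (hsub hy)).1.hasDerivWithinAt) hderiv_le
          (Metric.mem_closedBall_self (norm_nonneg _)) (by rw [Metric.mem_closedBall, dist_eq_norm])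
    _ = C * ‖(x - r) ^ (n + 1)‖ := by rw [norm_pow, pow_succ, mul_assoc]

theorem HasLeadingTerm.of_hasDerivAt (hf' : HasLeadingTerm f' c n r)
    (hf : ∀ᶠ x in 𝓝 r, HasDerivAt f (f' x) x) (hr : f r = 0) (hd : (n + 1 : 𝕜) • d = c) :
    HasLeadingTerm f d (n + 1) r := by
  have hmain (x : 𝕜) : HasDerivAt (fun y => (y - r) ^ (n + 1) • d) ((x - r) ^ n • c) x := by
    refine ((((hasDerivAt_id' x).sub_const r).pow (n + 1)).smul_const d).congr_deriv ?_
    rw [← hd, smul_smul]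
    push_cast [Nat.add_sub_cancel]
    ring_nf
  have h := isBigO_sub_pow_succ_of_hasDerivAt (hf.mono fun x hx => hx.sub (hmain x)) hf'
  simpa [HasLeadingTerm, hr] using h

end LeadingTerm

section Derivatives

variable {x : ℝ}

theorem hasDerivAt_sqrt_sq_sub {c : ℝ} (hx : c < x ^ 2) :
    HasDerivAt (fun y => √(y ^ 2 - c)) (x / √(x ^ 2 - c)) x := by
  have hsq : HasDerivAt (fun y : ℝ => y ^ 2 - c) (2 * x) x := by
    simpa using (hasDerivAt_pow 2 x).sub_const c
  exact (hsq.sqrt (sub_pos.2 hx).ne').congr_deriv (mul_div_mul_left _ _ two_ne_zero)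

theorem hasDerivAt_arctan_sqrt_sq_sub {c : ℝ} (hx : c < x ^ 2) :
    HasDerivAt (fun y => arctan √(y ^ 2 - c)) (x / (√(x ^ 2 - c) * (x ^ 2 - c + 1))) x := by
  refine (hasDerivAt_sqrt_sq_sub hx).arctan.congr_deriv ?_
  rw [Real.sq_sqrt (sub_pos.2 hx).le, one_div_mul_eq_div, div_div, add_comm 1]

theorem hasDerivAt_arccos_inv_sq_sub_one (hx : √2 < x) :
    HasDerivAt (fun y => arccos (y ^ 2 - 1)⁻¹) (2 / (√(x ^ 2 - 2) * (x ^ 2 - 1))) x := by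
  have hx0 : 0 < x := (Real.sqrt_nonneg 2).trans_lt hx
  have hx2 := Real.lt_sq_of_sqrt_lt hx
  have hu : 0 < x ^ 2 - 1 := by linarith
  have hs : 0 < √(x ^ 2 - 2) := Real.sqrt_pos.2 (by linarith)
  have hpos : 0 < (x ^ 2 - 1)⁻¹ := inv_pos.2 hu
  have hlt : (x ^ 2 - 1)⁻¹ < 1 := inv_lt_one_of_one_lt₀ (by linarith)
  have hinv : HasDerivAt (fun y : ℝ => (y ^ 2 - 1)⁻¹) (-(2 * x) / (x ^ 2 - 1) ^ 2) x := by
    simpa using ((hasDerivAt_pow 2 x).sub_const 1).fun_inv hu.ne'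
  have hsin : √(1 - (x ^ 2 - 1)⁻¹ ^ 2) = x * √(x ^ 2 - 2) / (x ^ 2 - 1) := by
    rw [Real.sqrt_eq_iff_mul_self_eq_of_pos (by positivity), ← sq, div_pow, mul_pow,
      Real.sq_sqrt (by linarith)]
    field_simp
    ring
  refine ((Real.hasDerivAt_arccos (by linarith) hlt.ne).comp x hinv).congr_deriv ?_
  rw [hsin]
  field_simp

end Derivatives

section ReducedDensity

/-- The rescaled density `a * P₃ a (a * x) / x`, which does not depend on `a`. The angle
`arccos (1 / √(x ^ 2 - 1))` of `P₃` is written `arctan √(x ^ 2 - 2)`, which equals it for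
`2 ≤ x ^ 2`. -/
noncomputable def reducedDensity (x : ℝ) : ℝ :=
  8 * (x ^ 2 + 1) * √(x ^ 2 - 2) - (x ^ 2 + 1) * (x ^ 2 + 5) + 2 * π * (3 * x ^ 2 - 4 * x + 3)
    + 24 * x * arccos (x ^ 2 - 1)⁻¹ - 24 * (x ^ 2 + 1) * arctan √(x ^ 2 - 2)

/-- The first derivative of `reducedDensity` on `(√2, ∞)`. -/
noncomputable def reducedDensityDeriv (x : ℝ) : ℝ :=
  24 * x * √(x ^ 2 - 2) - 4 * x ^ 3 - 12 * x + 2 * π * (6 * x - 4)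
    + 24 * arccos (x ^ 2 - 1)⁻¹ - 48 * x * arctan √(x ^ 2 - 2)

/-- The second derivative of `reducedDensity` on `(√2, ∞)`. -/
noncomputable def reducedDensityDeriv₂ (x : ℝ) : ℝ :=
  48 * √(x ^ 2 - 2) - 12 * x ^ 2 - 12 + 12 * π - 48 * arctan √(x ^ 2 - 2)

/-- The third derivative of `reducedDensity` on `(√2, ∞)`. -/
noncomputable def reducedDensityDeriv₃ (x : ℝ) : ℝ :=
  -24 * x * (√(x ^ 2 - 2) - 1) ^ 2 / (x ^ 2 - 1)

variable {a x : ℝ}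

theorem mul_P₃_mul (ha : 0 < a) (hx : 2 ≤ x ^ 2) : a * P₃ a (a * x) = x * reducedDensity x := by
  have hsqrt : √((a * x) ^ 2 - 2 * a ^ 2) = a * √(x ^ 2 - 2) := by
    rw [show (a * x) ^ 2 - 2 * a ^ 2 = a ^ 2 * (x ^ 2 - 2) by ring, Real.sqrt_mul (sq_nonneg a),
      Real.sqrt_sq ha.le]
  have hsub : (a * x) ^ 2 - a ^ 2 = a ^ 2 * (x ^ 2 - 1) := by ring
  have harccos : a ^ 2 / ((a * x) ^ 2 - a ^ 2) = (x ^ 2 - 1)⁻¹ := by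
    rw [hsub, div_mul_cancel_left₀ (pow_ne_zero 2 ha.ne')]
  have harctan : arccos (a / √((a * x) ^ 2 - a ^ 2)) = arctan √(x ^ 2 - 2) := by
    rw [Real.arctan_eq_arccos (Real.sqrt_nonneg _), Real.sq_sqrt (sub_nonneg.2 hx), hsub,
      Real.sqrt_mul (sq_nonneg a), Real.sqrt_sq ha.le, div_mul_cancel_left₀ ha.ne']
    ring_nf
  rw [P₃, hsqrt, harccos, harctan, reducedDensity]
  field_simp

theorem hasDerivAt_reducedDensity (hx : √2 < x) :
    HasDerivAt reducedDensity (reducedDensityDeriv x) x := by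
  have hx2 := Real.lt_sq_of_sqrt_lt hx
  have hs : 0 < √(x ^ 2 - 2) := Real.sqrt_pos.2 (by linarith)
  have hs_sq : √(x ^ 2 - 2) ^ 2 = x ^ 2 - 2 := Real.sq_sqrt (by linarith)
  have hu : x ^ 2 - 1 ≠ 0 := by linarith
  have hid := hasDerivAt_id' x
  have hsq := hasDerivAt_pow 2 x
  have hsqrt := ((hsq.add_const 1).const_mul 8).mul (hasDerivAt_sqrt_sq_sub hx2)
  have hquartic := (hsq.add_const 1).mul (hsq.add_const 5)
  have hquadratic := (((hsq.const_mul 3).sub (hid.const_mul 4)).add_const 3).const_mul (2 * π)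
  have harccos := (hid.const_mul 24).mul (hasDerivAt_arccos_inv_sq_sub_one hx)
  have harctan := ((hsq.add_const 1).const_mul 24).mul (hasDerivAt_arctan_sqrt_sq_sub hx2)
  refine ((((hsqrt.sub hquartic).add hquadratic).add harccos).sub harctan).congr_deriv ?_
  rw [reducedDensityDeriv, show x ^ 2 - 2 + 1 = x ^ 2 - 1 by ring]
  push_cast
  field_simp
  grind

theorem hasDerivAt_reducedDensityDeriv (hx : √2 < x) :
    HasDerivAt reducedDensityDeriv (reducedDensityDeriv₂ x) x := by
  have hx2 := Real.lt_sq_of_sqrt_lt hx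
  have hs : 0 < √(x ^ 2 - 2) := Real.sqrt_pos.2 (by linarith)
  have hs_sq : √(x ^ 2 - 2) ^ 2 = x ^ 2 - 2 := Real.sq_sqrt (by linarith)
  have hu : x ^ 2 - 1 ≠ 0 := by linarith
  have hid := hasDerivAt_id' x
  have hsqrt := (hid.const_mul 24).mul (hasDerivAt_sqrt_sq_sub hx2)
  have hcubic := (hasDerivAt_pow 3 x).const_mul 4
  have hlinear := ((hid.const_mul 6).sub_const 4).const_mul (2 * π)
  have harccos := (hasDerivAt_arccos_inv_sq_sub_one hx).const_mul 24
  have harctan := (hid.const_mul 48).mul (hasDerivAt_arctan_sqrt_sq_sub hx2)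
  refine (((((hsqrt.sub hcubic).sub (hid.const_mul 12)).add hlinear).add harccos).sub
    harctan).congr_deriv ?_
  rw [reducedDensityDeriv₂, show x ^ 2 - 2 + 1 = x ^ 2 - 1 by ring]
  push_cast
  field_simp
  grind

theorem hasDerivAt_reducedDensityDeriv₂ (hx : 2 < x ^ 2) :
    HasDerivAt reducedDensityDeriv₂ (reducedDensityDeriv₃ x) x := by
  have hs : 0 < √(x ^ 2 - 2) := Real.sqrt_pos.2 (by linarith)
  have hs_sq : √(x ^ 2 - 2) ^ 2 = x ^ 2 - 2 := Real.sq_sqrt (by linarith)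
  have hu : x ^ 2 - 1 ≠ 0 := by linarith
  have hsqrt := (hasDerivAt_sqrt_sq_sub hx).const_mul 48
  have hquadratic := (hasDerivAt_pow 2 x).const_mul 12
  have harctan := (hasDerivAt_arctan_sqrt_sq_sub hx).const_mul 48
  refine ((((hsqrt.sub hquadratic).sub_const 12).add_const (12 * π)).sub
    harctan).congr_deriv ?_
  rw [reducedDensityDeriv₃, show x ^ 2 - 2 + 1 = x ^ 2 - 1 by ring]
  push_cast
  field_simp
  grind

end ReducedDensity

section AtSqrtThree

theorem sq_sqrt_three : √3 ^ 2 = (3 : ℝ) := Real.sq_sqrt (by norm_num)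

theorem sqrt_sq_sub_two_sqrt_three : √(√3 ^ 2 - 2) = (1 : ℝ) := by
  rw [sq_sqrt_three]
  norm_num

theorem arccos_inv_two : arccos 2⁻¹ = π / 3 := by
  refine Real.arccos_eq_of_eq_cos (by positivity) (by linarith [Real.pi_pos]) ?_
  rw [Real.cos_pi_div_three, one_div]

theorem reducedDensity_sqrt_three : reducedDensity √3 = 0 := by
  rw [reducedDensity, sqrt_sq_sub_two_sqrt_three, arctan_one, sq_sqrt_three,
    show (3 : ℝ) - 1 = 2 by norm_num, arccos_inv_two]
  ring

theorem reducedDensityDeriv_sqrt_three : reducedDensityDeriv √3 = 0 := by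
  rw [reducedDensityDeriv, sqrt_sq_sub_two_sqrt_three, arctan_one, pow_succ, sq_sqrt_three,
    show (3 : ℝ) - 1 = 2 by norm_num, arccos_inv_two]
  ring

theorem reducedDensityDeriv₂_sqrt_three : reducedDensityDeriv₂ √3 = 0 := by
  rw [reducedDensityDeriv₂, sqrt_sq_sub_two_sqrt_three, arctan_one, sq_sqrt_three]
  ring

theorem eventually_sqrt_two_lt : ∀ᶠ x in 𝓝 √3, √2 < x :=
  eventually_gt_nhds (Real.sqrt_lt_sqrt (by norm_num) (by norm_num))

theorem reducedDensityDeriv₃_eq_mul_sq {x : ℝ} (hx : 2 ≤ x ^ 2) :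
    reducedDensityDeriv₃ x =
      -24 * x * (x + √3) ^ 2 / ((√(x ^ 2 - 2) + 1) ^ 2 * (x ^ 2 - 1)) * (x - √3) ^ 2 := by
  have hs : √(x ^ 2 - 2) + 1 ≠ 0 := by positivity
  have hrat : √(x ^ 2 - 2) - 1 = (x + √3) * (x - √3) / (√(x ^ 2 - 2) + 1) := by
    rw [eq_div_iff hs]
    linear_combination Real.sq_sqrt (sub_nonneg.2 hx) + sq_sqrt_three
  rw [reducedDensityDeriv₃, hrat]
  field_simp

theorem hasLeadingTerm_reducedDensityDeriv₃ :
    HasLeadingTerm reducedDensityDeriv₃ (-36 * √3) 2 √3 := by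
  let φ : ℝ → ℝ := fun x =>
    -24 * x * (x + √3) ^ 2 / ((√(x ^ 2 - 2) + 1) ^ 2 * (x ^ 2 - 1))
  have hdiff : DifferentiableAt ℝ φ √3 := by
    have hsqrt := (hasDerivAt_sqrt_sq_sub (c := 2) (x := √3)
      (by rw [sq_sqrt_three]; norm_num)).differentiableAt
    refine DifferentiableAt.fun_div (by fun_prop) (by fun_prop) ?_
    rw [sqrt_sq_sub_two_sqrt_three, sq_sqrt_three]
    norm_num
  have hφ_sqrt_three : φ √3 = -36 * √3 := by
    simp only [φ]
    rw [sqrt_sq_sub_two_sqrt_three, ← two_mul, mul_pow, sq_sqrt_three]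
    ring
  have hmul := (HasLeadingTerm.of_differentiableAt hdiff).smul (.sub_pow 2 √3)
  rw [hφ_sqrt_three, smul_eq_mul, mul_one, zero_add] at hmul
  refine hmul.congr ?_
  filter_upwards [eventually_sqrt_two_lt] with x hx
  exact (reducedDensityDeriv₃_eq_mul_sq (Real.lt_sq_of_sqrt_lt hx).le).symm

theorem hasLeadingTerm_reducedDensity :
    HasLeadingTerm reducedDensity (-(3 * √3 / 5)) 5 √3 := by
  have hderiv₂ : HasLeadingTerm reducedDensityDeriv₂ (-12 * √3) 3 √3 :=
    hasLeadingTerm_reducedDensityDeriv₃.of_hasDerivAt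
      (eventually_sqrt_two_lt.mono fun _ hx =>
        hasDerivAt_reducedDensityDeriv₂ (Real.lt_sq_of_sqrt_lt hx))
      reducedDensityDeriv₂_sqrt_three (by rw [smul_eq_mul]; push_cast; ring)
  have hderiv : HasLeadingTerm reducedDensityDeriv (-3 * √3) 4 √3 :=
    hderiv₂.of_hasDerivAt (eventually_sqrt_two_lt.mono fun _ => hasDerivAt_reducedDensityDeriv)
      reducedDensityDeriv_sqrt_three (by rw [smul_eq_mul]; push_cast; ring)
  exact hderiv.of_hasDerivAt (eventually_sqrt_two_lt.mono fun _ => hasDerivAt_reducedDensity)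
    reducedDensity_sqrt_three (by rw [smul_eq_mul]; push_cast; ring)

theorem hasLeadingTerm_mul_P₃_mul {a : ℝ} (ha : 0 < a) :
    HasLeadingTerm (fun x => a * P₃ a (a * x)) (-9 / 5) 5 √3 := by
  have hmul := (HasLeadingTerm.of_differentiableAt differentiableAt_fun_id).smul
    hasLeadingTerm_reducedDensity
  have hcoeff : √3 • -(3 * √3 / 5) = (-9 / 5 : ℝ) := by
    rw [smul_eq_mul]
    linear_combination -(3 / 5) * sq_sqrt_three
  rw [hcoeff, zero_add] at hmul
  refine hmul.congr (eventually_sqrt_two_lt.mono fun x hx => ?_)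
  exact (mul_P₃_mul ha (Real.lt_sq_of_sqrt_lt hx).le).symm

end AtSqrtThree

theorem density_asymptotics_near_diagonal_general (a : ℝ) (ha : 0 < a) :
    (fun l => a * P₃ a l - 9 / 5 * (√3 - l / a) ^ 5) =O[𝓝 (√3 * a)]
      (fun l => (√3 - l / a) ^ 6) := by
  have hscale : Tendsto (fun l : ℝ => l / a) (𝓝 (√3 * a)) (𝓝 √3) := by
    simpa only [id, mul_div_cancel_right₀ _ ha.ne'] using
      (tendsto_id (x := 𝓝 (√3 * a))).div_const a
  refine ((hasLeadingTerm_mul_P₃_mul ha).comp_tendsto hscale).congr (fun l => ?_) fun l => ?_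
  · simp only [Function.comp_apply, mul_div_cancel₀ l ha.ne', smul_eq_mul]
    ring
  · simp only [Function.comp_apply]
    ring

theorem density_asymptotics_near_diagonal (a : ℝ) (ha : 0 < a) :
    (fun l => a * P₃ a l - 9 / 5 * (Real.sqrt 3 - l / a) ^ 5) =O[
        𝓝[Set.Ioo (Real.sqrt 2 * a) (Real.sqrt 3 * a)] (Real.sqrt 3 * a)]
      (fun l => (Real.sqrt 3 - l / a) ^ 6) :=
  (density_asymptotics_near_diagonal_general a ha).mono nhdsWithin_le_nhds
end

section
/- The volume of the set {(A,B) ∈ C × C : dist(A,B) ≤ a} equals (43/30 − π/6)·a⁶; in particular the proportion of pairs of points of the cube whose separation does not exceed the side length lies strictly between 0.909 and 0.910 (about 91%). -/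
open MeasureTheory Real Set

/-- The cube `[0,a]³` in Euclidean 3-space. -/
def cube (a : ℝ) : Set (EuclideanSpace ℝ (Fin 3)) := {x | ∀ i, x i ∈ Set.Icc 0 a}

/-!
Two points of `[0,a]ⁿ` differ by `d` on a set of volume `∏ᵢ (a - |dᵢ|)⁺`, so the pairs at distance
at most `r` fill a volume `∫_{‖d‖ ≤ r} ∏ᵢ (a - |dᵢ|)⁺`. For `r ≤ a` the positive parts can be
dropped, and expanding the product leaves only the moments `∫_{‖d‖ ≤ r} ∏_{i ∈ s} |dᵢ|`. Integrating
a homogeneous function against `exp (-‖x‖²)` gives its integral over the unit ball times a value of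
`Γ`, while the Gaussian integral of `∏_{i ∈ s} |xᵢ|` splits into one-dimensional ones.
-/

open scoped ENNReal

theorem lintegral_exp_neg_of_measure_sublevel_eq_rpow {α : Type*} {_ : MeasurableSpace α}
    {ν : Measure α} [SFinite ν] {φ : α → ℝ} (hφ : Measurable φ) (hφ_nonneg : ∀ x, 0 ≤ φ x)
    {s : ℝ} (hs : -1 < s) {c : ℝ≥0∞}
    (hν : ∀ u > 0, ν {x | φ x ≤ u} = ENNReal.ofReal (u ^ s) * c) :
    ∫⁻ x, ENNReal.ofReal (exp (-φ x)) ∂ν = ENNReal.ofReal (Gamma (s + 1)) * c := by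
  have exp_neg_eq_lintegral (t : ℝ) :
      ENNReal.ofReal (exp (-t)) = ∫⁻ u in Ici t, ENNReal.ofReal (exp (-u)) := by
    rw [setLIntegral_congr Ioi_ae_eq_Ici.symm,
      ← ofReal_integral_eq_lintegral_ofReal (integrableOn_exp_neg_Ioi t)
        (ae_of_all _ fun _ ↦ (exp_pos _).le), integral_exp_neg_Ioi]
  let F : α × ℝ → ℝ≥0∞ := {p | φ p.1 ≤ p.2}.indicator fun p ↦ ENNReal.ofReal (exp (-p.2))
  have hF : Measurable F :=
    Measurable.indicator (by fun_prop) (measurableSet_le (by fun_prop) (by fun_prop))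
  calc ∫⁻ x, ENNReal.ofReal (exp (-φ x)) ∂ν
      = ∫⁻ x, (∫⁻ u in Ioi 0, F (x, u)) ∂ν := by
        refine lintegral_congr fun x ↦ ?_
        rw [exp_neg_eq_lintegral, setLIntegral_congr Ioi_ae_eq_Ici]
        change _ = ∫⁻ u in Ici 0, (Ici (φ x)).indicator (fun u ↦ ENNReal.ofReal (exp (-u))) u
        rw [setLIntegral_indicator measurableSet_Ici,
          inter_eq_left.2 (Ici_subset_Ici.2 (hφ_nonneg x))]
    _ = ∫⁻ u in Ioi 0, ∫⁻ x, F (x, u) ∂ν := lintegral_lintegral_swap hF.aemeasurable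
    _ = ∫⁻ u in Ioi 0, ENNReal.ofReal (exp (-u) * u ^ s) * c := by
        refine setLIntegral_congr_fun measurableSet_Ioi fun u hu ↦ ?_
        change ∫⁻ x, {x | φ x ≤ u}.indicator (fun _ ↦ ENNReal.ofReal (exp (-u))) x ∂ν = _
        rw [lintegral_indicator_const (measurableSet_le hφ measurable_const), hν u hu,
          ENNReal.ofReal_mul (exp_pos _).le, mul_assoc]
    _ = ENNReal.ofReal (Gamma (s + 1)) * c := by
        have integrable : IntegrableOn (fun u ↦ exp (-u) * u ^ s) (Ioi 0) := by
          simpa using GammaIntegral_convergent (s := s + 1) (by linarith)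
        rw [lintegral_mul_const _ (by fun_prop), Gamma_eq_integral (by linarith),
          add_sub_cancel_right,
          ofReal_integral_eq_lintegral_ofReal integrable]
        filter_upwards [ae_restrict_mem measurableSet_Ioi] with u hu
        exact mul_nonneg (exp_pos _).le (rpow_nonneg (le_of_lt hu) _)

section Homogeneous

open scoped Pointwise
open Module (finrank)
open Metric (closedBall)

variable {E : Type*} [NormedAddCommGroup E] [NormedSpace ℝ E] [FiniteDimensional ℝ E]
  [MeasurableSpace E] [BorelSpace E] (μ : Measure E) [μ.IsAddHaarMeasure]
  {f : E → ℝ≥0∞} {k : ℝ}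

theorem setLIntegral_smul_set_of_homogeneous
    (hf : ∀ t : ℝ, 0 < t → ∀ x, f (t • x) = ENNReal.ofReal (t ^ k) * f x)
    {r : ℝ} (hr : 0 < r) (s : Set E) :
    ∫⁻ x in r • s, f x ∂μ =
      ENNReal.ofReal (r ^ (finrank ℝ E + k)) * ∫⁻ x in s, f x ∂μ := by
  have smul_embedding : MeasurableEmbedding (r • · : E → E) :=
    (MeasurableEquiv.smul₀ r hr.ne').measurableEmbedding
  have lintegral_scaled : ENNReal.ofReal (r ^ k) * ∫⁻ x in s, f x ∂μ =
      ENNReal.ofReal |(r ^ finrank ℝ E)⁻¹| * ∫⁻ x in r • s, f x ∂μ := by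
    calc ENNReal.ofReal (r ^ k) * ∫⁻ x in s, f x ∂μ
        = ∫⁻ x in (r • ·) ⁻¹' (r • s), f (r • x) ∂μ := by
          rw [preimage_smul₀ hr.ne', inv_smul_smul₀ hr.ne']
          simp only [hf r hr]
          rw [lintegral_const_mul' _ _ ENNReal.ofReal_ne_top]
      _ = ∫⁻ x in r • s, f x ∂μ.map (r • ·) := by
          rw [smul_embedding.restrict_map, smul_embedding.lintegral_map]
      _ = _ := by
          rw [Measure.map_addHaar_smul μ hr.ne', Measure.restrict_smul, lintegral_smul_measure,
            smul_eq_mul]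
  rw [rpow_add hr, rpow_natCast, ENNReal.ofReal_mul (by positivity), mul_assoc, lintegral_scaled,
    ← mul_assoc, ← ENNReal.ofReal_mul (by positivity), abs_of_pos (by positivity),
    mul_inv_cancel₀ (by positivity), ENNReal.ofReal_one, one_mul]

theorem setLIntegral_closedBall_of_homogeneous
    (hf : ∀ t : ℝ, 0 < t → ∀ x, f (t • x) = ENNReal.ofReal (t ^ k) * f x)
    {r : ℝ} (hr : 0 < r) :
    ∫⁻ x in closedBall 0 r, f x ∂μ =
      ENNReal.ofReal (r ^ (finrank ℝ E + k)) * ∫⁻ x in closedBall 0 1, f x ∂μ := by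
  rw [← setLIntegral_smul_set_of_homogeneous μ hf hr, smul_unitClosedBall, norm_of_nonneg hr.le]

theorem lintegral_mul_exp_neg_norm_rpow_of_homogeneous (hf_meas : Measurable f)
    (hf : ∀ t : ℝ, 0 < t → ∀ x, f (t • x) = ENNReal.ofReal (t ^ k) * f x)
    {p : ℝ} (hp : 0 < p) (hk : -p < finrank ℝ E + k) :
    ∫⁻ x, f x * ENNReal.ofReal (exp (-‖x‖ ^ p)) ∂μ =
      ENNReal.ofReal (Gamma ((finrank ℝ E + k) / p + 1)) *
        ∫⁻ x in closedBall 0 1, f x ∂μ := by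
  rw [← lintegral_exp_neg_of_measure_sublevel_eq_rpow (ν := μ.withDensity f)
    (φ := fun x ↦ ‖x‖ ^ p) (by fun_prop) (fun x ↦ by positivity)
    (by rwa [lt_div_iff₀ hp, neg_one_mul]),
    lintegral_withDensity_eq_lintegral_mul _ hf_meas (by fun_prop)]
  · rfl
  intro u hu
  have sublevel_eq : {x : E | ‖x‖ ^ p ≤ u} = closedBall 0 (u ^ p⁻¹) := by
    ext x
    rw [mem_closedBall_zero_iff, mem_ofPred_eq, le_rpow_inv_iff_of_pos (norm_nonneg x) hu.le hp]
  rw [sublevel_eq, withDensity_apply _ Metric.isClosed_closedBall.measurableSet,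
    setLIntegral_closedBall_of_homogeneous μ hf (by positivity), ← rpow_mul hu.le]
  congr 3
  ring

end Homogeneous

theorem integral_abs_rpow_mul_exp_neg_abs_rpow {p q : ℝ} (hp : 0 < p) (hq : -1 < q) :
    ∫ t : ℝ, |t| ^ q * exp (-|t| ^ p) = 2 / p * Gamma ((q + 1) / p) := by
  rw [integral_comp_abs (f := fun t ↦ t ^ q * exp (-t ^ p)),
    integral_rpow_mul_exp_neg_rpow hp hq]
  ring

section EuclideanMoments

open Fintype (card)
open Metric (closedBall)

variable {ι : Type*} [Fintype ι]

theorem integral_prod_abs_rpow_mul_exp_neg_norm_sq {q : ι → ℝ} (hq : ∀ i, -1 < q i) :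
    ∫ x : EuclideanSpace ℝ ι, (∏ i, |x i| ^ q i) * exp (-‖x‖ ^ (2 : ℝ)) =
      ∏ i, Gamma ((q i + 1) / 2) := by
  calc ∫ x : EuclideanSpace ℝ ι, (∏ i, |x i| ^ q i) * exp (-‖x‖ ^ (2 : ℝ))
      = ∫ x : EuclideanSpace ℝ ι, ∏ i, |x.ofLp i| ^ q i * exp (-|x.ofLp i| ^ (2 : ℝ)) := by
        simp only [rpow_two, EuclideanSpace.real_norm_sq_eq, sq_abs, Finset.prod_mul_distrib,
          ← exp_sum, Finset.sum_neg_distrib]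
    _ = ∫ y : ι → ℝ, ∏ i, |y i| ^ q i * exp (-|y i| ^ (2 : ℝ)) :=
        (EuclideanSpace.volume_preserving_symm_measurableEquiv_toLp ι).integral_comp'
          fun y : ι → ℝ ↦ ∏ i, |y i| ^ q i * exp (-|y i| ^ (2 : ℝ))
    _ = ∏ i, Gamma ((q i + 1) / 2) := by
        rw [integral_fintype_prod_volume_eq_prod
          fun i (t : ℝ) ↦ |t| ^ q i * exp (-|t| ^ (2 : ℝ))]
        refine Finset.prod_congr rfl fun i _ ↦ ?_
        rw [integral_abs_rpow_mul_exp_neg_abs_rpow two_pos (hq i), div_self two_ne_zero, one_mul]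

theorem setLIntegral_closedBall_prod_abs_rpow {q : ι → ℝ} (hq : ∀ i, -1 < q i) {r : ℝ}
    (hr : 0 < r) :
    ∫⁻ x in closedBall (0 : EuclideanSpace ℝ ι) r, ENNReal.ofReal (∏ i, |x i| ^ q i) =
      ENNReal.ofReal (r ^ (card ι + ∑ i, q i) * (∏ i, Gamma ((q i + 1) / 2)) /
        Gamma ((card ι + ∑ i, q i) / 2 + 1)) := by
  have hΓ (i : ι) : 0 < Gamma ((q i + 1) / 2) := Gamma_pos_of_pos (by linarith [hq i])
  have degree_nonneg : 0 ≤ card ι + ∑ i, q i := by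
    have : card ι + ∑ i, q i = ∑ i, (1 + q i) := by simp [Finset.sum_add_distrib]
    exact this ▸ Finset.sum_nonneg fun i _ ↦ by linarith [hq i]
  have hΓ_degree : 0 < Gamma ((card ι + ∑ i, q i) / 2 + 1) :=
    Gamma_pos_of_pos (by positivity)
  have homogeneous (t : ℝ) (ht : 0 < t) (x : EuclideanSpace ℝ ι) :
      ENNReal.ofReal (∏ i, |(t • x) i| ^ q i) =
        ENNReal.ofReal (t ^ ∑ i, q i) * ENNReal.ofReal (∏ i, |x i| ^ q i) := by
    rw [← ENNReal.ofReal_mul (by positivity), rpow_sum_of_pos ht, ← Finset.prod_mul_distrib]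
    simp only [PiLp.smul_apply, smul_eq_mul, abs_mul, abs_of_pos ht,
      mul_rpow ht.le (abs_nonneg _)]
  have gaussian_moment : ∫⁻ x : EuclideanSpace ℝ ι,
      ENNReal.ofReal (∏ i, |x i| ^ q i) * ENNReal.ofReal (exp (-‖x‖ ^ (2 : ℝ))) =
      ENNReal.ofReal (∏ i, Gamma ((q i + 1) / 2)) := by
    have integral_eq := integral_prod_abs_rpow_mul_exp_neg_norm_sq hq
    rw [← integral_eq, ofReal_integral_eq_lintegral_ofReal]
    · exact lintegral_congr fun x ↦ (ENNReal.ofReal_mul (by positivity)).symm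
    · exact .of_integral_ne_zero (integral_eq ▸ (Finset.prod_pos fun i _ ↦ hΓ i).ne')
    · exact ae_of_all _ fun x ↦ by positivity
  rw [setLIntegral_closedBall_of_homogeneous volume homogeneous hr]
  rw [lintegral_mul_exp_neg_norm_rpow_of_homogeneous volume (by fun_prop) homogeneous two_pos
    (by rw [finrank_euclideanSpace]; linarith), finrank_euclideanSpace] at gaussian_moment
  rw [finrank_euclideanSpace, mul_div_assoc, ENNReal.ofReal_mul (by positivity),
    ENNReal.ofReal_div_of_pos hΓ_degree, ← gaussian_moment, mul_comm (ENNReal.ofReal (Gamma _)),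
    ENNReal.mul_div_cancel_right (ENNReal.ofReal_pos.2 hΓ_degree).ne' ENNReal.ofReal_ne_top]

/-- The moment `∫_{‖x‖ ≤ r} |x₁ ⋯ x_k| dx` of the ball of radius `r` in `ℝⁿ`, for `k ≤ n`, in closed
form. It is the coefficient in the volume of the pairs at distance at most `r` in a cube. -/
noncomputable def ballAbsMoment (n k : ℕ) (r : ℝ) : ℝ :=
  r ^ (n + k) * √π ^ (n - k) / Gamma ((n + k) / 2 + 1)

theorem setIntegral_closedBall_prod_abs (s : Finset ι) {r : ℝ} (hr : 0 < r) :
    ∫ x in closedBall (0 : EuclideanSpace ℝ ι) r, ∏ i ∈ s, |x i| =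
      ballAbsMoment (card ι) s.card r := by
  classical
  let q : ι → ℝ := fun i ↦ if i ∈ s then 1 else 0
  have hq (i : ι) : -1 < q i := by
    simp only [q]
    split_ifs <;> norm_num
  have sum_q : ∑ i, q i = s.card := by simp [q]
  have prod_rpow (x : EuclideanSpace ℝ ι) : ∏ i, |x i| ^ q i = ∏ i ∈ s, |x i| := by
    simp [q, apply_ite, Finset.prod_ite_mem]
  have prod_Gamma : ∏ i, Gamma ((q i + 1) / 2) = √π ^ (card ι - s.card) := by
    have Gamma_eq_ite (i : ι) : Gamma ((q i + 1) / 2) = if i ∈ s then 1 else √π := by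
      split_ifs with hi
      · simp [q, hi]
      · simp only [q, hi, if_false, zero_add, Gamma_one_half_eq]
    simp [Gamma_eq_ite, Finset.prod_ite, Finset.filter_not, Finset.card_sdiff]
  have moment := setLIntegral_closedBall_prod_abs_rpow hq hr
  simp only [prod_rpow, prod_Gamma, sum_q] at moment
  rw [integral_eq_lintegral_of_nonneg_ae (ae_of_all _ fun x ↦ by positivity)
    (Measurable.aestronglyMeasurable (by fun_prop)), moment, ENNReal.toReal_ofReal (by positivity),
    ballAbsMoment, ← rpow_natCast r (card ι + s.card), Nat.cast_add]

theorem setIntegral_closedBall_prod_sub_abs (a : ℝ) {r : ℝ} (hr : 0 < r) :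
    ∫ x in closedBall (0 : EuclideanSpace ℝ ι) r, ∏ i, (a - |x i|) =
      ∑ k ∈ Finset.range (card ι + 1),
        (-1) ^ k * (card ι).choose k * a ^ (card ι - k) * ballAbsMoment (card ι) k r := by
  classical
  have integrable (s : Finset ι) : IntegrableOn (fun x : EuclideanSpace ℝ ι ↦
      (-1) ^ s.card * a ^ (card ι - s.card) * ∏ i ∈ s, |x i|) (closedBall 0 r) :=
    (Continuous.continuousOn (by fun_prop)).integrableOn_compact (isCompact_closedBall 0 r)
  calc ∫ x in closedBall (0 : EuclideanSpace ℝ ι) r, ∏ i, (a - |x i|)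
      = ∫ x in closedBall (0 : EuclideanSpace ℝ ι) r, ∑ s ∈ Finset.univ.powerset,
          (-1) ^ s.card * a ^ (card ι - s.card) * ∏ i ∈ s, |x i| := by
        simp [Finset.prod_sub, Finset.card_sdiff]
    _ = ∑ s ∈ (Finset.univ : Finset ι).powerset,
          (-1) ^ s.card * a ^ (card ι - s.card) * ballAbsMoment (card ι) s.card r := by
        rw [integral_finsetSum _ fun s _ ↦ integrable s]
        simp only [integral_const_mul, setIntegral_closedBall_prod_abs _ hr]
    _ = _ := by
        rw [Finset.sum_powerset_apply_card
          fun k ↦ (-1) ^ k * a ^ (card ι - k) * ballAbsMoment (card ι) k r, Finset.card_univ]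
        refine Finset.sum_congr rfl fun k _ ↦ ?_
        rw [nsmul_eq_mul]
        ring

end EuclideanMoments

theorem measure_prod_eq_lintegral_measure_add {G : Type*} [AddGroup G] [MeasurableSpace G]
    [MeasurableAdd₂ G] (μ ν : Measure G) [SFinite μ] [SFinite ν] [ν.IsAddLeftInvariant]
    {T : Set (G × G)} (hT : MeasurableSet T) :
    (μ.prod ν) T = ∫⁻ d, μ {x | (x, x + d) ∈ T} ∂ν := by
  have shear := measurePreserving_prod_add μ ν
  rw [← shear.measure_preimage hT.nullMeasurableSet, Measure.prod_apply_symm (shear.measurable hT)]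
  rfl

theorem volume_Icc_inter_preimage_add_Icc (b c u : ℝ) :
    volume (Icc b c ∩ (· + u) ⁻¹' Icc b c) = ENNReal.ofReal (c - b - |u|) := by
  rw [preimage_add_const_Icc, Icc_inter_Icc, Real.volume_Icc]
  congr 1
  rcases le_total 0 u with hu | hu
  · rw [inf_eq_right.2 (by linarith), sup_eq_left.2 (by linarith), abs_of_nonneg hu]; ring
  · rw [inf_eq_left.2 (by linarith), sup_eq_right.2 (by linarith), abs_of_nonpos hu]; ring

section CubePairs

open Fintype (card)
open Metric (closedBall)

variable {ι : Type*} [Fintype ι]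

theorem volume_forall_mem_Icc_and_add_mem_Icc (b c : ℝ) (d : EuclideanSpace ℝ ι) :
    volume {x : EuclideanSpace ℝ ι | (∀ i, x i ∈ Icc b c) ∧ ∀ i, (x + d) i ∈ Icc b c} =
      ∏ i, ENNReal.ofReal (c - b - |d i|) := by
  simp only [← volume_Icc_inter_preimage_add_Icc, ← volume_pi_pi]
  rw [← (EuclideanSpace.volume_preserving_symm_measurableEquiv_toLp ι).measure_preimage_equiv]
  congr 1
  ext x
  simp only [← forall_and, mem_preimage, mem_univ_pi, mem_inter_iff]
  rfl

theorem volume_pairs_dist_le_eq_lintegral (b c r : ℝ) :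
    volume {p : EuclideanSpace ℝ ι × EuclideanSpace ℝ ι |
        (∀ i, p.1 i ∈ Icc b c) ∧ (∀ i, p.2 i ∈ Icc b c) ∧ dist p.1 p.2 ≤ r} =
      ∫⁻ d in closedBall (0 : EuclideanSpace ℝ ι) r,
        ∏ i, ENNReal.ofReal (c - b - |d i|) := by
  have measurable_pairs : MeasurableSet {p : EuclideanSpace ℝ ι × EuclideanSpace ℝ ι |
        (∀ i, p.1 i ∈ Icc b c) ∧ (∀ i, p.2 i ∈ Icc b c) ∧ dist p.1 p.2 ≤ r} := by
    measurability
  rw [Measure.volume_eq_prod, measure_prod_eq_lintegral_measure_add _ _ measurable_pairs,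
    ← lintegral_indicator Metric.isClosed_closedBall.measurableSet]
  refine lintegral_congr fun d ↦ ?_
  by_cases hd : ‖d‖ ≤ r
  · rw [indicator_of_mem (mem_closedBall_zero_iff.2 hd),
      ← volume_forall_mem_Icc_and_add_mem_Icc b c d]
    simp [hd]
  · rw [indicator_of_notMem (mem_closedBall_zero_iff.not.2 hd)]
    simp [hd]

theorem volume_pairs_dist_le_side_general {a r : ℝ} (hr : 0 < r) (hra : r ≤ a) :
    volume {p : EuclideanSpace ℝ ι × EuclideanSpace ℝ ι |
        (∀ i, p.1 i ∈ Icc 0 a) ∧ (∀ i, p.2 i ∈ Icc 0 a) ∧ dist p.1 p.2 ≤ r} =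
      ENNReal.ofReal (∑ k ∈ Finset.range (card ι + 1),
        (-1) ^ k * (card ι).choose k * a ^ (card ι - k) * ballAbsMoment (card ι) k r) := by
  have sub_abs_nonneg {d : EuclideanSpace ℝ ι} (hd : d ∈ closedBall 0 r) (i : ι) :
      0 ≤ a - |d i| := by
    have := PiLp.norm_apply_le d i
    rw [mem_closedBall_zero_iff] at hd
    rw [norm_eq_abs] at this
    linarith
  have integrable : IntegrableOn (fun d : EuclideanSpace ℝ ι ↦ ∏ i, (a - |d i|))
      (closedBall 0 r) :=
    (Continuous.continuousOn (by fun_prop)).integrableOn_compact (isCompact_closedBall 0 r)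
  rw [volume_pairs_dist_le_eq_lintegral, ← setIntegral_closedBall_prod_sub_abs a hr,
    ofReal_integral_eq_lintegral_ofReal integrable]
  · refine setLIntegral_congr_fun Metric.isClosed_closedBall.measurableSet fun d hd ↦ ?_
    simp only [sub_zero]
    rw [ENNReal.ofReal_prod_of_nonneg fun i _ ↦ sub_abs_nonneg hd i]
  · filter_upwards [ae_restrict_mem Metric.isClosed_closedBall.measurableSet] with d hd
    exact Finset.prod_nonneg fun i _ ↦ sub_abs_nonneg hd i

end CubePairs

theorem volume_pairs_dist_le_fin_three {a r : ℝ} (hr : 0 < r) (hra : r ≤ a) :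
    volume {p : EuclideanSpace ℝ (Fin 3) × EuclideanSpace ℝ (Fin 3) |
        (∀ i, p.1 i ∈ Icc 0 a) ∧ (∀ i, p.2 i ∈ Icc 0 a) ∧ dist p.1 p.2 ≤ r} =
      ENNReal.ofReal (4 / 3 * π * a ^ 3 * r ^ 3 - 3 / 2 * π * a ^ 2 * r ^ 4 +
        8 / 5 * a * r ^ 5 - r ^ 6 / 6) := by
  have Gamma_five_halves : Gamma (5 / 2) = 3 / 4 * √π := by
    have := Gamma_nat_add_half 2
    norm_num [Nat.doubleFactorial] at this ⊢
    linarith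
  have Gamma_seven_halves : Gamma (7 / 2) = 15 / 8 * √π := by
    have := Gamma_nat_add_half 3
    norm_num [Nat.doubleFactorial] at this ⊢
    linarith
  have moment_zero : ballAbsMoment 3 0 r = 4 / 3 * π * r ^ 3 := by
    norm_num [ballAbsMoment, Gamma_five_halves]
    field_simp
    rw [sq_sqrt pi_nonneg]
  have moment_one : ballAbsMoment 3 1 r = π / 2 * r ^ 4 := by
    norm_num [ballAbsMoment, Gamma_ofNat_eq_factorial, sq_sqrt pi_nonneg]
    ring
  have moment_two : ballAbsMoment 3 2 r = 8 / 15 * r ^ 5 := by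
    norm_num [ballAbsMoment, Gamma_seven_halves]
    field_simp
  have moment_three : ballAbsMoment 3 3 r = r ^ 6 / 6 := by
    norm_num [ballAbsMoment, Gamma_ofNat_eq_factorial]
  rw [volume_pairs_dist_le_side_general hr hra, Fintype.card_fin]
  congr 1
  norm_num [Finset.sum_range_succ, moment_zero, moment_one, moment_two, moment_three, Nat.choose]
  ring

theorem volume_pairs_dist_le_side (a : ℝ) (ha : 0 < a) :
    volume {p : EuclideanSpace ℝ (Fin 3) × EuclideanSpace ℝ (Fin 3) |
        p.1 ∈ cube a ∧ p.2 ∈ cube a ∧ dist p.1 p.2 ≤ a} =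
      ENNReal.ofReal ((43 / 30 - π / 6) * a ^ 6) ∧
    (0.909 : ℝ) < 43 / 30 - π / 6 ∧ (43 / 30 - π / 6 : ℝ) < 0.910 := by
  refine ⟨(volume_pairs_dist_le_fin_three ha le_rfl).trans ?_,
    by linarith [pi_lt_d4], by linarith [pi_gt_d4]⟩
  congr 1
  ring
end

section
/- The proportion of pairs with separation between a and √2·a is about 9%: the volume of the set {(A,B) ∈ C × C : a < dist(A,B) ≤ √2·a} lies strictly between 0.085·a⁶ and 0.095·a⁶. -/
open MeasureTheory Real Set

/-!
For independent uniform points of the unit cube, the three coordinate differences are independent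
with the triangular density `1 - |x|` on `[-1, 1]`, so the volume to be estimated is `a ^ 6` times
the probability that their squares `X²`, `Y²`, `Z²` satisfy `1 < X² + Y² + Z² ≤ 2`. The integrals
`𝔼 √(t - X²) ^ n` give, one coordinate at a time, the exact value
`P(X² + Y² + Z² ≤ 1) = 43/30 - π/6`. Since `Y² + Z² ≤ |Y| + |Z|`, the corner `X² + Y² + Z² > 2` has
probability at most `P(X² + |Y| + |Z| > 2) = 1/270`. The probability in question is therefore at
most `π/6 - 13/30 ≈ 0.0903`, and smaller than this by at most `1/270 ≈ 0.0037`.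
-/

lemma measureReal_prod_eq_integral {α β : Type*} [MeasurableSpace α] [MeasurableSpace β]
    (μ : Measure α) (ν : Measure β) [IsFiniteMeasure ν] {s : Set (α × β)} (hs : MeasurableSet s) :
    (μ.prod ν).real s = ∫ x, ν.real (Prod.mk x ⁻¹' s) ∂μ := by
  rw [measureReal_def, Measure.prod_apply hs]
  exact (integral_toReal (measurable_measure_prodMk_left hs).aemeasurable
    (ae_of_all _ fun _ ↦ measure_lt_top ν _)).symm

lemma intervalIntegral_eq_of_eq_zero_outside {E : Type*} [NormedAddCommGroup E]
    [NormedSpace ℝ E] {f : ℝ → E} {a b c d : ℝ} (hac : a ≤ c) (hcd : c ≤ d) (hdb : d ≤ b)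
    (hf : ∀ x ∈ Ioc a b, x ∉ Ioc c d → f x = 0) :
    ∫ x in a..b, f x = ∫ x in c..d, f x := by
  rw [intervalIntegral.integral_of_le (hac.trans (hcd.trans hdb)),
    intervalIntegral.integral_of_le hcd]
  exact setIntegral_eq_of_subset_of_forall_sdiff_eq_zero measurableSet_Ioc (Ioc_subset_Ioc hac hdb)
    fun x hx ↦ hf x hx.1 hx.2

lemma integral_cos_pow_add_two_zero_pi_div_two (n : ℕ) :
    ∫ θ in 0..π / 2, cos θ ^ (n + 2) = (n + 1) / (n + 2) * ∫ θ in 0..π / 2, cos θ ^ n := by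
  simp [integral_cos_pow]

lemma integral_cos_sq_zero_pi_div_two : ∫ θ in 0..π / 2, cos θ ^ 2 = π / 4 := by
  rw [integral_cos_pow_add_two_zero_pi_div_two 0]
  simp only [pow_zero, intervalIntegral.integral_const, smul_eq_mul]
  push_cast
  ring

lemma integral_cos_pow_three_zero_pi_div_two : ∫ θ in 0..π / 2, cos θ ^ 3 = 2 / 3 := by
  rw [integral_cos_pow_add_two_zero_pi_div_two 1]
  norm_num

lemma integral_cos_pow_four_zero_pi_div_two : ∫ θ in 0..π / 2, cos θ ^ 4 = 3 * π / 16 := by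
  rw [integral_cos_pow_add_two_zero_pi_div_two 2, integral_cos_sq_zero_pi_div_two]
  push_cast
  ring

lemma integral_cos_pow_five_zero_pi_div_two : ∫ θ in 0..π / 2, cos θ ^ 5 = 8 / 15 := by
  rw [integral_cos_pow_add_two_zero_pi_div_two 3, integral_cos_pow_three_zero_pi_div_two]
  norm_num

lemma intervalIntegral_eq_integral_mul_sin {g : ℝ → ℝ} (hg : Continuous g) (r : ℝ) :
    ∫ x in 0..r, g x = ∫ θ in 0..π / 2, g (r * sin θ) * (r * cos θ) := by
  have h := intervalIntegral.integral_comp_mul_deriv (a := 0) (b := π / 2)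
    (fun θ _ ↦ (hasDerivAt_sin θ).const_mul r) (by fun_prop) hg
  simpa using h.symm

lemma integral_one_sub_mul_sqrt_pow {r : ℝ} (hr : 0 ≤ r) (n : ℕ) :
    ∫ x in 0..r, (1 - x) * √(r ^ 2 - x ^ 2) ^ n =
      r ^ (n + 1) * (∫ θ in 0..π / 2, cos θ ^ (n + 1)) - r ^ (n + 2) / (n + 2) := by
  have integrand_eq : ∀ θ ∈ uIcc 0 (π / 2),
      (1 - r * sin θ) * √(r ^ 2 - (r * sin θ) ^ 2) ^ n * (r * cos θ) =
        r ^ (n + 1) * cos θ ^ (n + 1) - r ^ (n + 2) * (sin θ * cos θ ^ (n + 1)) := by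
    intro θ hθ
    rw [uIcc_of_le pi_div_two_pos.le] at hθ
    have hcos : 0 ≤ cos θ := cos_nonneg_of_neg_pi_div_two_le_of_le (by linarith [hθ.1, pi_pos]) hθ.2
    have hsqrt : √(r ^ 2 - (r * sin θ) ^ 2) = r * cos θ := by
      rw [← sqrt_sq (mul_nonneg hr hcos), mul_pow, mul_pow, cos_sq']
      ring_nf
    rw [hsqrt]
    ring
  have integral_sin_mul_cos_pow : ∫ θ in 0..π / 2, sin θ * cos θ ^ (n + 1) = 1 / (n + 2) := by
    have h := integral_sin_pow_odd_mul_cos_pow (a := 0) (b := π / 2) 0 (n + 1)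
    simpa [add_assoc, one_add_one_eq_two] using h
  rw [intervalIntegral_eq_integral_mul_sin (by fun_prop),
    intervalIntegral.integral_congr integrand_eq,
    intervalIntegral.integral_sub (Continuous.intervalIntegrable (by fun_prop) _ _)
      (Continuous.intervalIntegrable (by fun_prop) _ _),
    intervalIntegral.integral_const_mul, intervalIntegral.integral_const_mul,
    integral_sin_mul_cos_pow, mul_one_div]

/-- The triangular distribution on `[-1, 1]`, the law of the difference of two independent uniform
points of `[0, 1]`. Outside `[-1, 1]` the density vanishes because `ENNReal.ofReal` truncates
negative values to `0`. -/
noncomputable def triangularMeasure : Measure ℝ :=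
  volume.withDensity fun x ↦ ENNReal.ofReal (1 - |x|)

lemma volume_Icc_inter_preimage_add (d : ℝ) :
    volume (Icc (0 : ℝ) 1 ∩ (d + ·) ⁻¹' Icc 0 1) = ENNReal.ofReal (1 - |d|) := by
  have : Icc (0 : ℝ) 1 ∩ (d + ·) ⁻¹' Icc 0 1 = Icc (max 0 (-d)) (min 1 (1 - d)) := by
    ext y
    simp only [mem_inter_iff, mem_preimage, mem_Icc, max_le_iff, le_min_iff]
    grind
  rw [this, Real.volume_Icc]
  grind

lemma measurePreserving_sub_unitSquare :
    MeasurePreserving (fun p : ℝ × ℝ ↦ p.1 - p.2)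
      (volume.restrict (Icc 0 1 ×ˢ Icc 0 1)) triangularMeasure := by
  refine ⟨by fun_prop, Measure.ext fun s hs ↦ ?_⟩
  have hshear : MeasurePreserving (fun p : ℝ × ℝ ↦ (p.1 - p.2, p.2)) volume volume :=
    measurePreserving_sub_prod volume volume
  set T : Set (ℝ × ℝ) := {q | q.1 ∈ s ∧ q.2 ∈ Icc 0 1 ∩ (q.1 + ·) ⁻¹' Icc 0 1} with hT_def
  have hT : MeasurableSet T := by
    refine (measurable_fst hs).inter (.inter (measurable_snd measurableSet_Icc) ?_)
    exact (measurable_fst.add measurable_snd) measurableSet_Icc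
  have preimage_T : (fun p : ℝ × ℝ ↦ (p.1 - p.2, p.2)) ⁻¹' T =
      (fun p : ℝ × ℝ ↦ p.1 - p.2) ⁻¹' s ∩ Icc 0 1 ×ˢ Icc 0 1 := by
    ext p
    simp only [hT_def, mem_preimage, mem_ofPred_eq, mem_inter_iff, mem_prod, sub_add_cancel]
    tauto
  have slice_T (d : ℝ) : volume (Prod.mk d ⁻¹' T) =
      s.indicator (fun d ↦ ENNReal.ofReal (1 - |d|)) d := by
    by_cases hd : d ∈ s
    · rw [indicator_of_mem hd, ← volume_Icc_inter_preimage_add d]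
      congr 1
      ext y
      simp [hT_def, hd]
    · simp [hT_def, hd]
  rw [Measure.map_apply (by fun_prop) hs,
    Measure.restrict_apply ((show Measurable fun p : ℝ × ℝ ↦ p.1 - p.2 by fun_prop) hs),
    ← preimage_T, hshear.measure_preimage hT.nullMeasurableSet, Measure.volume_eq_prod,
    Measure.prod_apply hT, triangularMeasure, withDensity_apply _ hs, ← lintegral_indicator hs]
  simp_rw [slice_T]

instance : IsProbabilityMeasure triangularMeasure := by
  have hsquare : volume (Icc (0 : ℝ) 1 ×ˢ Icc (0 : ℝ) 1) = 1 := by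
    rw [Measure.volume_eq_prod, Measure.prod_prod]
    simp
  have : IsProbabilityMeasure ((volume : Measure (ℝ × ℝ)).restrict (Icc 0 1 ×ˢ Icc 0 1)) :=
    isProbabilityMeasure_iff.2 (by simpa using hsquare)
  rw [← measurePreserving_sub_unitSquare.map_eq]
  exact Measure.isProbabilityMeasure_map measurePreserving_sub_unitSquare.aemeasurable

lemma integral_comp_abs_triangularMeasure (f : ℝ → ℝ) :
    ∫ x, f |x| ∂triangularMeasure = ∫ x in 0..1, 2 * (1 - x) * f x := by
  have hsupport : ∀ x ∈ Ioi (0 : ℝ) \ Ioc 0 1, max (1 - x) 0 * f x = 0 := by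
    intro x hx
    have : 1 - x ≤ 0 := by grind
    simp [this]
  rw [triangularMeasure, integral_withDensity_eq_integral_toReal_smul (by fun_prop)
    (ae_of_all _ fun _ ↦ ENNReal.ofReal_lt_top)]
  simp only [ENNReal.toReal_ofReal', smul_eq_mul]
  rw [integral_comp_abs (f := fun x ↦ max (1 - x) 0 * f x),
    setIntegral_eq_of_subset_of_forall_sdiff_eq_zero measurableSet_Ioi Ioc_subset_Ioi_self hsupport,
    intervalIntegral.integral_of_le zero_le_one, ← integral_const_mul]
  refine setIntegral_congr_fun measurableSet_Ioc fun x hx ↦ ?_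
  simp [hx.2, mul_assoc]

lemma integrable_triangularMeasure_of_continuous {f : ℝ → ℝ} (hf : Continuous f) :
    Integrable f triangularMeasure := by
  rw [triangularMeasure, integrable_withDensity_iff_integrable_smul' (by fun_prop)
    (ae_of_all _ fun _ ↦ ENNReal.ofReal_lt_top)]
  simp only [ENNReal.toReal_ofReal', smul_eq_mul]
  refine Continuous.integrable_of_hasCompactSupport (by fun_prop)
    (.intro (isCompact_Icc (a := -1) (b := 1)) fun x hx ↦ ?_)
  have : 1 - |x| ≤ 0 := by grind
  simp [this]

lemma triangularMeasure_real_abs_le {r : ℝ} (h0 : 0 ≤ r) (h1 : r ≤ 1) :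
    triangularMeasure.real {x | |x| ≤ r} = 2 * r - r ^ 2 := by
  have hind : ∀ x ∈ uIcc 0 r, 2 * (1 - x) * (Iic r).indicator 1 x = 2 * (1 - x) := by
    intro x hx
    rw [uIcc_of_le h0] at hx
    simp [hx.2]
  calc triangularMeasure.real {x | |x| ≤ r}
      = ∫ x, (Iic r).indicator 1 |x| ∂triangularMeasure :=
        (integral_indicator_one (measurableSet_le (by fun_prop) (by fun_prop))).symm
    _ = ∫ x in 0..r, 2 * (1 - x) * (Iic r).indicator 1 x := by
        rw [integral_comp_abs_triangularMeasure,
          intervalIntegral_eq_of_eq_zero_outside le_rfl h0 h1]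
        intro x hx hxr
        have : ¬ x ≤ r := fun h ↦ hxr ⟨hx.1, h⟩
        simp [this]
    _ = 2 * r - r ^ 2 := by
        rw [intervalIntegral.integral_congr hind, intervalIntegral.integral_const_mul,
          intervalIntegral.integral_sub (by simp) (by simp)]
        simp only [intervalIntegral.integral_const, integral_id, smul_eq_mul]
        ring

lemma triangularMeasure_real_lt_abs {r : ℝ} (h0 : 0 ≤ r) (h1 : r ≤ 1) :
    triangularMeasure.real {x | r < |x|} = (1 - r) ^ 2 := by
  have hcompl : {x : ℝ | r < |x|} = {x | |x| ≤ r}ᶜ := by ext x; simp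
  rw [hcompl, probReal_compl_eq_one_sub (measurableSet_le (by fun_prop) (by fun_prop)),
    triangularMeasure_real_abs_le h0 h1]
  ring

lemma triangularMeasure_real_lt_abs_eq_zero {r : ℝ} (hr : 1 ≤ r) :
    triangularMeasure.real {x | r < |x|} = 0 := by
  have h : triangularMeasure.real {x | 1 < |x|} = 0 := by
    simpa using triangularMeasure_real_lt_abs zero_le_one le_rfl
  exact measureReal_mono_null (fun x hx ↦ hr.trans_lt hx) h

lemma ae_abs_le_one_triangularMeasure : ∀ᵐ x ∂triangularMeasure, |x| ≤ 1 := by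
  simpa [ae_iff] using (measureReal_eq_zero_iff (measure_ne_top _ _)).1
    (triangularMeasure_real_lt_abs_eq_zero le_rfl)

-- Negative `t` is allowed, both sides being `0` then, so that slices need no case distinction.
lemma integral_sqrt_sub_sq_pow_triangularMeasure {t : ℝ} (ht : t ≤ 1) {n : ℕ} (hn : n ≠ 0) :
    ∫ x, √(t - x ^ 2) ^ n ∂triangularMeasure =
      2 * (√t ^ (n + 1) * (∫ θ in 0..π / 2, cos θ ^ (n + 1)) - √t ^ (n + 2) / (n + 2)) := by
  have sqrt_eq_zero {x : ℝ} (hx : t ≤ x ^ 2) : √(t - x ^ 2) = 0 :=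
    sqrt_eq_zero_of_nonpos (by linarith)
  rcases lt_or_ge t 0 with hneg | hpos
  · simp [sqrt_eq_zero (hneg.le.trans (sq_nonneg _)), sqrt_eq_zero_of_nonpos hneg.le, hn]
  have outside : ∀ x ∈ Ioc (0 : ℝ) 1, x ∉ Ioc 0 √t → 2 * (1 - x) * √(t - x ^ 2) ^ n = 0 := by
    intro x hx hxt
    have : √t ≤ x := le_of_not_ge fun h ↦ hxt ⟨hx.1, h⟩
    simp [sqrt_eq_zero ((sqrt_le_left hx.1.le).1 this), hn]
  calc ∫ x, √(t - x ^ 2) ^ n ∂triangularMeasure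
      = ∫ x in 0..1, 2 * (1 - x) * √(t - x ^ 2) ^ n := by
        rw [← integral_comp_abs_triangularMeasure fun x ↦ √(t - x ^ 2) ^ n]
        simp only [sq_abs]
    _ = ∫ x in 0..√t, 2 * ((1 - x) * √(√t ^ 2 - x ^ 2) ^ n) := by
        rw [intervalIntegral_eq_of_eq_zero_outside le_rfl (sqrt_nonneg t) (sqrt_le_one.2 ht)
          outside, sq_sqrt hpos]
        simp only [mul_assoc]
    _ = 2 * (√t ^ (n + 1) * (∫ θ in 0..π / 2, cos θ ^ (n + 1)) - √t ^ (n + 2) / (n + 2)) := by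
        rw [intervalIntegral.integral_const_mul, integral_one_sub_mul_sqrt_pow (sqrt_nonneg t)]

lemma triangularMeasure_real_sq_le {t : ℝ} (ht : t ≤ 1) :
    triangularMeasure.real {x | x ^ 2 ≤ t} = 2 * √t - √t ^ 2 := by
  rcases lt_or_ge t 0 with hneg | hpos
  · have : {x : ℝ | x ^ 2 ≤ t} = ∅ := by
      ext x
      simpa using hneg.trans_le (sq_nonneg x)
    simp [this, sqrt_eq_zero_of_nonpos hneg.le]
  · rw [← triangularMeasure_real_abs_le (sqrt_nonneg t) (sqrt_le_one.2 ht)]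
    congr 1
    ext x
    rw [mem_ofPred_eq, mem_ofPred_eq, Real.le_sqrt (abs_nonneg x) hpos, sq_abs]

lemma triangularMeasure_prod_real_sq_add_sq_le {t : ℝ} (ht : t ≤ 1) :
    (triangularMeasure.prod triangularMeasure).real {p | p.1 ^ 2 + p.2 ^ 2 ≤ t} =
      π * √t ^ 2 - 8 / 3 * √t ^ 3 + √t ^ 4 / 2 := by
  have slice (x : ℝ) :
      triangularMeasure.real (Prod.mk x ⁻¹' {p : ℝ × ℝ | p.1 ^ 2 + p.2 ^ 2 ≤ t}) =
        2 * √(t - x ^ 2) ^ 1 - √(t - x ^ 2) ^ 2 := by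
    rw [pow_one, ← triangularMeasure_real_sq_le (by nlinarith)]
    simp only [preimage_ofPred_eq, le_sub_iff_add_le']
  rw [measureReal_prod_eq_integral _ _ (measurableSet_le (by fun_prop) (by fun_prop))]
  simp_rw [slice]
  rw [integral_sub (integrable_triangularMeasure_of_continuous (by fun_prop))
      (integrable_triangularMeasure_of_continuous (by fun_prop)), integral_const_mul,
    integral_sqrt_sub_sq_pow_triangularMeasure ht one_ne_zero,
    integral_sqrt_sub_sq_pow_triangularMeasure ht two_ne_zero,
    integral_cos_sq_zero_pi_div_two, integral_cos_pow_three_zero_pi_div_two]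
  push_cast
  ring

lemma triangularMeasure_prod_prod_real_sq_le_one :
    (triangularMeasure.prod (triangularMeasure.prod triangularMeasure)).real
      {q | q.1 ^ 2 + (q.2.1 ^ 2 + q.2.2 ^ 2) ≤ 1} = 43 / 30 - π / 6 := by
  have slice (x : ℝ) :
      (triangularMeasure.prod triangularMeasure).real
        (Prod.mk x ⁻¹' {q : ℝ × ℝ × ℝ | q.1 ^ 2 + (q.2.1 ^ 2 + q.2.2 ^ 2) ≤ 1}) =
        π * √(1 - x ^ 2) ^ 2 - 8 / 3 * √(1 - x ^ 2) ^ 3 + 1 / 2 * √(1 - x ^ 2) ^ 4 := by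
    rw [one_div_mul_eq_div, ← triangularMeasure_prod_real_sq_add_sq_le (by nlinarith)]
    simp only [preimage_ofPred_eq, le_sub_iff_add_le']
  rw [measureReal_prod_eq_integral _ _ (measurableSet_le (by fun_prop) (by fun_prop))]
  simp_rw [slice]
  rw [integral_add (integrable_triangularMeasure_of_continuous (by fun_prop))
      (integrable_triangularMeasure_of_continuous (by fun_prop)),
    integral_sub (integrable_triangularMeasure_of_continuous (by fun_prop))
      (integrable_triangularMeasure_of_continuous (by fun_prop)),
    integral_const_mul, integral_const_mul, integral_const_mul,
    integral_sqrt_sub_sq_pow_triangularMeasure le_rfl two_ne_zero,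
    integral_sqrt_sub_sq_pow_triangularMeasure le_rfl three_ne_zero,
    integral_sqrt_sub_sq_pow_triangularMeasure le_rfl four_ne_zero,
    integral_cos_pow_three_zero_pi_div_two, integral_cos_pow_four_zero_pi_div_two,
    integral_cos_pow_five_zero_pi_div_two, sqrt_one]
  push_cast
  ring

lemma triangularMeasure_prod_real_two_sub_lt_abs_add_abs {m : ℝ} (h0 : 0 ≤ m) (h1 : m ≤ 1) :
    (triangularMeasure.prod triangularMeasure).real {p | 2 - m < |p.1| + |p.2|} = m ^ 4 / 6 := by
  have outside : ∀ x ∈ Ioc (0 : ℝ) 1, x ∉ Ioc (1 - m) 1 →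
      2 * (1 - x) * triangularMeasure.real {y | 2 - m - x < |y|} = 0 := by
    intro x hx hxm
    have hx' : x ≤ 1 - m := le_of_not_gt fun h ↦ hxm ⟨h, hx.2⟩
    rw [triangularMeasure_real_lt_abs_eq_zero (by linarith), mul_zero]
  have integrand_eq : ∀ x ∈ uIcc (1 - m) 1,
      2 * (1 - x) * triangularMeasure.real {y | 2 - m - x < |y|} =
        2 * (m ^ 2 * (1 - x) - 2 * m * (1 - x) ^ 2 + (1 - x) ^ 3) := by
    intro x hx
    rw [uIcc_of_le (by linarith)] at hx
    rw [triangularMeasure_real_lt_abs (by linarith [hx.2]) (by linarith [hx.1])]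
    ring
  have integral_polynomial : ∫ y in 0..m, 2 * (m ^ 2 * y - 2 * m * y ^ 2 + y ^ 3) = m ^ 4 / 6 := by
    rw [intervalIntegral.integral_const_mul, intervalIntegral.integral_add
        (Continuous.intervalIntegrable (by fun_prop) _ _) (by simp),
      intervalIntegral.integral_sub (Continuous.intervalIntegrable (by fun_prop) _ _)
        (Continuous.intervalIntegrable (by fun_prop) _ _),
      intervalIntegral.integral_const_mul, intervalIntegral.integral_const_mul]
    simp only [integral_id, integral_pow]
    push_cast
    ring
  rw [measureReal_prod_eq_integral _ _ (measurableSet_lt (by fun_prop) (by fun_prop))]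
  calc ∫ x, triangularMeasure.real {y | 2 - m < |x| + |y|} ∂triangularMeasure
      = ∫ x, triangularMeasure.real {y | 2 - m - |x| < |y|} ∂triangularMeasure := by
        simp only [sub_lt_iff_lt_add']
    _ = ∫ x in (1 - m)..1, 2 * (1 - x) * triangularMeasure.real {y | 2 - m - x < |y|} := by
        rw [integral_comp_abs_triangularMeasure
            fun x ↦ triangularMeasure.real {y | 2 - m - x < |y|},
          intervalIntegral_eq_of_eq_zero_outside (by linarith) (by linarith) le_rfl outside]
    _ = ∫ y in 0..m, 2 * (m ^ 2 * y - 2 * m * y ^ 2 + y ^ 3) := by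
        rw [intervalIntegral.integral_congr integrand_eq,
          intervalIntegral.integral_comp_sub_left
            (fun y ↦ 2 * (m ^ 2 * y - 2 * m * y ^ 2 + y ^ 3)) 1]
        simp
    _ = m ^ 4 / 6 := integral_polynomial

lemma triangularMeasure_prod_prod_real_two_lt_sq_add_abs_add_abs :
    (triangularMeasure.prod (triangularMeasure.prod triangularMeasure)).real
      {q | 2 < q.1 ^ 2 + (|q.2.1| + |q.2.2|)} = 1 / 270 := by
  have slice : ∀ᵐ x ∂triangularMeasure,
      (triangularMeasure.prod triangularMeasure).real
        (Prod.mk x ⁻¹' {q : ℝ × ℝ × ℝ | 2 < q.1 ^ 2 + (|q.2.1| + |q.2.2|)}) = |x| ^ 8 / 6 := by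
    filter_upwards [ae_abs_le_one_triangularMeasure] with x hx
    have hx8 : |x| ^ 8 = (x ^ 2) ^ 4 := by rw [← sq_abs]; ring
    rw [hx8, ← triangularMeasure_prod_real_two_sub_lt_abs_add_abs (sq_nonneg x)
      ((sq_le_one_iff_abs_le_one x).2 hx)]
    simp only [preimage_ofPred_eq, sub_lt_iff_lt_add']
  rw [measureReal_prod_eq_integral _ _ (measurableSet_lt (by fun_prop) (by fun_prop)),
    integral_congr_ae slice, integral_comp_abs_triangularMeasure fun x ↦ x ^ 8 / 6]
  have (x : ℝ) : 2 * (1 - x) * (x ^ 8 / 6) = 1 / 3 * (x ^ 8 - x ^ 9) := by ring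
  simp_rw [this]
  rw [intervalIntegral.integral_const_mul, intervalIntegral.integral_sub (by simp) (by simp)]
  norm_num

lemma triangularMeasure_prod_prod_real_two_lt_sq_le :
    (triangularMeasure.prod (triangularMeasure.prod triangularMeasure)).real
      {q | 2 < q.1 ^ 2 + (q.2.1 ^ 2 + q.2.2 ^ 2)} ≤ 1 / 270 := by
  rw [← triangularMeasure_prod_prod_real_two_lt_sq_add_abs_add_abs]
  refine ENNReal.toReal_mono (measure_ne_top _ _) (measure_mono_ae ?_)
  filter_upwards [Measure.quasiMeasurePreserving_snd.ae
    (Measure.quasiMeasurePreserving_fst.ae ae_abs_le_one_triangularMeasure),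
    Measure.quasiMeasurePreserving_snd.ae
      (Measure.quasiMeasurePreserving_snd.ae ae_abs_le_one_triangularMeasure)] with q hu hv hq
  have sq_le_abs {x : ℝ} (hx : |x| ≤ 1) : x ^ 2 ≤ |x| := by
    rw [← sq_abs]
    exact pow_le_of_le_one (abs_nonneg x) hx two_ne_zero
  exact lt_of_lt_of_le hq (by gcongr <;> exact sq_le_abs ‹_›)

lemma triangularMeasure_prod_prod_real_sqrt_mem_Ioc :
    (triangularMeasure.prod (triangularMeasure.prod triangularMeasure)).real
        {q | √(q.1 ^ 2 + (q.2.1 ^ 2 + q.2.2 ^ 2)) ∈ Ioc 1 √2} ∈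
      Icc (π / 6 - 13 / 30 - 1 / 270) (π / 6 - 13 / 30) := by
  set μ := triangularMeasure.prod (triangularMeasure.prod triangularMeasure)
  set S : ℝ × ℝ × ℝ → ℝ := fun q ↦ q.1 ^ 2 + (q.2.1 ^ 2 + q.2.2 ^ 2)
  have hS : Measurable S := by fun_prop
  have sqrt_mem_eq : {q | √(S q) ∈ Ioc 1 √2} = {q | S q ≤ 1}ᶜ \ {q | 2 < S q} := by
    ext q
    simp [Real.lt_sqrt, Real.sqrt_le_sqrt_iff]
  have corner_subset : {q | 2 < S q} ⊆ {q | S q ≤ 1}ᶜ := by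
    intro q hq
    simp only [mem_compl_iff, mem_ofPred_eq, not_le] at hq ⊢
    exact one_lt_two.trans hq
  have middle_eq : μ.real {q | √(S q) ∈ Ioc 1 √2} =
      1 - μ.real {q | S q ≤ 1} - μ.real {q | 2 < S q} := by
    rw [sqrt_mem_eq, measureReal_sdiff corner_subset (measurableSet_lt measurable_const hS),
      probReal_compl_eq_one_sub (measurableSet_le hS measurable_const)]
  have ball_eq : μ.real {q | S q ≤ 1} = 43 / 30 - π / 6 :=
    triangularMeasure_prod_prod_real_sq_le_one
  have corner_le : μ.real {q | 2 < S q} ≤ 1 / 270 :=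
    triangularMeasure_prod_prod_real_two_lt_sq_le
  have corner_nonneg : 0 ≤ μ.real {q | 2 < S q} := measureReal_nonneg
  constructor <;> linarith

/-- The pairs of points of `[0,a]³` whose distance lies in `s`. -/
def cubePairs (a : ℝ) (s : Set ℝ) : Set (EuclideanSpace ℝ (Fin 3) × EuclideanSpace ℝ (Fin 3)) :=
  {p | p.1 ∈ cube a ∧ p.2 ∈ cube a ∧ dist p.1 p.2 ∈ s}

open scoped Pointwise in
lemma smul_cubePairs {a : ℝ} (ha : 0 < a) (b : ℝ) (s : Set ℝ) :
    a • cubePairs b s = cubePairs (a * b) (a • s) := by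
  ext p
  have hcube (x : EuclideanSpace ℝ (Fin 3)) : a⁻¹ • x ∈ cube b ↔ x ∈ cube (a * b) :=
    forall_congr' fun i ↦ by simp [inv_mul_le_iff₀ ha, le_inv_mul_iff₀ ha]
  have hdist : dist (a⁻¹ • p.1) (a⁻¹ • p.2) = a⁻¹ • dist p.1 p.2 := by
    rw [dist_smul₀, Real.norm_of_nonneg (by positivity), smul_eq_mul]
  simp only [cubePairs, mem_smul_set_iff_inv_smul_mem₀ ha.ne', mem_ofPred_eq, Prod.smul_fst,
    Prod.smul_snd, hcube, hdist]

open scoped Pointwise in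
lemma volume_cubePairs_smul {a : ℝ} (ha : 0 < a) (b : ℝ) (s : Set ℝ) :
    volume (cubePairs (a * b) (a • s)) = ENNReal.ofReal (a ^ 6) * volume (cubePairs b s) := by
  have haar : (volume : Measure (EuclideanSpace ℝ (Fin 3) × EuclideanSpace ℝ (Fin 3)))
      |>.IsAddHaarMeasure := by
    rw [Measure.volume_eq_prod]
    infer_instance
  rw [← smul_cubePairs ha, Measure.addHaar_smul]
  simp [abs_of_pos ha]

lemma measurePreserving_sub_unitCube (ι : Type*) [Fintype ι] :
    MeasurePreserving
      (fun (p : EuclideanSpace ℝ ι × EuclideanSpace ℝ ι) i ↦ p.1 i - p.2 i)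
      (volume.restrict {p | ∀ i, p.1 i ∈ Icc 0 1 ∧ p.2 i ∈ Icc 0 1})
      (Measure.pi fun _ ↦ triangularMeasure) := by
  have coordinates : MeasurePreserving
      (fun (p : EuclideanSpace ℝ ι × EuclideanSpace ℝ ι) i ↦ (p.1 i, p.2 i)) volume volume :=
    (volume_measurePreserving_arrowProdEquivProdArrow ℝ ℝ ι).symm.comp
      ((PiLp.volume_preserving_ofLp ι).prod (PiLp.volume_preserving_ofLp ι))
  have hsquares : MeasurableSet (univ.pi fun _ : ι ↦ Icc (0 : ℝ) 1 ×ˢ Icc (0 : ℝ) 1) :=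
    .univ_pi fun _ ↦ measurableSet_Icc.prod measurableSet_Icc
  have differences := measurePreserving_pi _ _ fun _ : ι ↦ measurePreserving_sub_unitSquare
  rw [← Measure.restrict_pi_pi] at differences
  have preimage_eq : {p : EuclideanSpace ℝ ι × EuclideanSpace ℝ ι |
      ∀ i, p.1 i ∈ Icc 0 1 ∧ p.2 i ∈ Icc 0 1} =
      (fun p i ↦ (p.1 i, p.2 i)) ⁻¹' univ.pi fun _ ↦ Icc (0 : ℝ) 1 ×ˢ Icc (0 : ℝ) 1 := by
    ext p
    simp only [mem_ofPred_eq, mem_preimage, mem_univ_pi, mem_prod]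
  rw [preimage_eq]
  exact differences.comp (coordinates.restrict_preimage hsquares)

lemma measurePreserving_pi_fin_three {α : Type*} [MeasurableSpace α] (μ : Measure α)
    [SigmaFinite μ] :
    MeasurePreserving (fun x : Fin 3 → α ↦ (x 0, x 1, x 2)) (.pi fun _ ↦ μ)
      (μ.prod (μ.prod μ)) :=
  ((MeasurePreserving.id μ).prod (measurePreserving_finTwoArrow μ)).comp
    (measurePreserving_piFinSuccAbove (fun _ ↦ μ) 0)

lemma volume_cubePairs_one {s : Set ℝ} (hs : MeasurableSet s) :
    volume (cubePairs 1 s) = (triangularMeasure.prod (triangularMeasure.prod triangularMeasure))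
      {q | √(q.1 ^ 2 + (q.2.1 ^ 2 + q.2.2 ^ 2)) ∈ s} := by
  have hmeas : MeasurableSet {q : ℝ × ℝ × ℝ | √(q.1 ^ 2 + (q.2.1 ^ 2 + q.2.2 ^ 2)) ∈ s} :=
    (show Measurable fun q : ℝ × ℝ × ℝ ↦ √(q.1 ^ 2 + (q.2.1 ^ 2 + q.2.2 ^ 2)) by fun_prop) hs
  have hdiff := (measurePreserving_pi_fin_three triangularMeasure).comp
    (measurePreserving_sub_unitCube (Fin 3))
  rw [← hdiff.measure_preimage hmeas.nullMeasurableSet,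
    Measure.restrict_apply (hdiff.measurable hmeas)]
  congr 1
  ext p
  have hdist : dist p.1 p.2 =
      √((p.1 0 - p.2 0) ^ 2 + ((p.1 1 - p.2 1) ^ 2 + (p.1 2 - p.2 2) ^ 2)) := by
    simp [EuclideanSpace.dist_eq, Fin.sum_univ_three, Real.dist_eq, add_assoc]
  simp only [cubePairs, cube, hdist, mem_ofPred_eq, mem_inter_iff, mem_preimage, forall_and,
    Function.comp_apply]
  tauto

lemma volume_cubePairs_Ioc {a : ℝ} (ha : 0 < a) (r s : ℝ) :
    volume (cubePairs a (Ioc (a * r) (a * s))) = ENNReal.ofReal (a ^ 6 *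
      (triangularMeasure.prod (triangularMeasure.prod triangularMeasure)).real
        {q | √(q.1 ^ 2 + (q.2.1 ^ 2 + q.2.2 ^ 2)) ∈ Ioc r s}) := by
  rw [ENNReal.ofReal_mul (by positivity), ofReal_measureReal,
    ← volume_cubePairs_one measurableSet_Ioc, ← volume_cubePairs_smul ha,
    LinearOrderedField.smul_Ioc ha, mul_one]

theorem volume_pairs_middle_range (a : ℝ) (ha : 0 < a) :
    ENNReal.ofReal (0.085 * a ^ 6) <
      volume {p : EuclideanSpace ℝ (Fin 3) × EuclideanSpace ℝ (Fin 3) |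
        p.1 ∈ cube a ∧ p.2 ∈ cube a ∧ a < dist p.1 p.2 ∧ dist p.1 p.2 ≤ Real.sqrt 2 * a} ∧
    volume {p : EuclideanSpace ℝ (Fin 3) × EuclideanSpace ℝ (Fin 3) |
        p.1 ∈ cube a ∧ p.2 ∈ cube a ∧ a < dist p.1 p.2 ∧ dist p.1 p.2 ≤ Real.sqrt 2 * a} <
      ENNReal.ofReal (0.095 * a ^ 6) := by
  have pairs_eq : {p : EuclideanSpace ℝ (Fin 3) × EuclideanSpace ℝ (Fin 3) |
      p.1 ∈ cube a ∧ p.2 ∈ cube a ∧ a < dist p.1 p.2 ∧ dist p.1 p.2 ≤ √2 * a} =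
      cubePairs a (Ioc (a * 1) (a * √2)) := by
    rw [mul_one, mul_comm a]
    rfl
  rw [pairs_eq, volume_cubePairs_Ioc ha, mul_comm _ (a ^ 6), mul_comm _ (a ^ 6)]
  obtain ⟨lower, upper⟩ := triangularMeasure_prod_prod_real_sqrt_mem_Ioc
  have lower_const : (0.085 : ℝ) < π / 6 - 13 / 30 - 1 / 270 := by linarith [pi_gt_d4]
  have upper_const : π / 6 - 13 / 30 < (0.095 : ℝ) := by linarith [pi_lt_d4]
  constructor
  · rw [ENNReal.ofReal_lt_ofReal_iff_of_nonneg (by positivity)]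
    gcongr
    exact lower_const.trans_le lower
  · rw [ENNReal.ofReal_lt_ofReal_iff (by positivity)]
    gcongr
    exact upper.trans_lt upper_const
end

section
/- Only a tiny proportion of pairs have separation exceeding √2·a: the volume of the set {(A,B) ∈ C × C : dist(A,B) > √2·a} is strictly less than 0.0005·a⁶ (about 0.04% of all pairs). -/
open MeasureTheory Real Set

/-!
Two points of the cube are more than `√2 * a` apart exactly when the three defects
`1 - ((xᵢ - yᵢ) / a) ^ 2` add up to less than `1`. Under Lebesgue measure the defects are
independent, and each is below `t` on a set of area `a ^ 2 * (1 - √(1 - t)) ^ 2`, which is at most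
`a ^ 2 * (t ^ 2 / 4 + t ^ 3 / 6 + 7 * t ^ 6 / 12)`. Replacing the three laws by the measure with
this larger polynomial distribution function only increases the mass of `{sum < 1}`. For the
larger measure that mass is explicit, since the monomial `t ^ k / k!` is the distribution function
of the `k`-th convolution power of Lebesgue measure on `[0, ∞)`.
-/

open scoped ENNReal Nat

/-! ### Convolution powers -/

section ConvPow

variable {M : Type*} [AddCommMonoid M] [MeasurableSpace M]

/-- The `n`-fold additive convolution power of a measure; the `0`-th power is the Dirac mass
at `0`. -/
noncomputable def convPow (μ : Measure M) : ℕ → Measure M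
  | 0 => Measure.dirac 0
  | n + 1 => μ ∗ convPow μ n

instance convPow.instSFinite (μ : Measure M) [SFinite μ] : ∀ n, SFinite (convPow μ n)
  | 0 => inferInstanceAs (SFinite (Measure.dirac 0))
  | n + 1 =>
    have := convPow.instSFinite μ n
    inferInstanceAs (SFinite (μ ∗ convPow μ n))

variable [MeasurableAdd₂ M]

theorem convPow_add (μ : Measure M) [SFinite μ] (m n : ℕ) :
    convPow μ (m + n) = convPow μ m ∗ convPow μ n := by
  induction m with
  | zero => rw [zero_add, convPow, Measure.dirac_zero_conv]
  | succ m ih => rw [Nat.succ_add, convPow, convPow, ih, Measure.conv_assoc]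

theorem map_sum_pi_eq_convPow (μ : Measure M) [SigmaFinite μ] (n : ℕ) :
    (Measure.pi fun _ : Fin n ↦ μ).map (fun x ↦ ∑ i, x i) = convPow μ n := by
  induction n with
  | zero => simp [convPow]
  | succ n ih =>
    have htail : MeasurePreserving (fun x : Fin n → M ↦ ∑ i, x i) (Measure.pi fun _ ↦ μ)
        (convPow μ n) := ⟨by fun_prop, ih⟩
    have hsplit := measurePreserving_piFinSuccAbove (fun _ : Fin (n + 1) ↦ μ) 0
    rw [convPow, Measure.conv, ← (((MeasurePreserving.id μ).prod htail).comp hsplit).map_eq,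
      Measure.map_map (by fun_prop) (by fun_prop)]
    congr with x
    simp [Fin.sum_univ_succ, MeasurableEquiv.piFinSuccAbove, Fin.tail]

end ConvPow

section Domination

variable {G : Type*} [AddCommGroup G] [LinearOrder G] [IsOrderedAddMonoid G] [TopologicalSpace G]
  [OrderClosedTopology G] [MeasurableSpace G] [OpensMeasurableSpace G] [MeasurableAdd₂ G]

theorem conv_apply_Iio (μ ν : Measure G) [SFinite ν] (t : G) :
    (μ ∗ ν) (Iio t) = ∫⁻ x, ν (Iio (t - x)) ∂μ := by
  have hmeas : Measurable fun p : G × G ↦ p.1 + p.2 := measurable_add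
  rw [Measure.conv, Measure.map_apply hmeas measurableSet_Iio,
    Measure.prod_apply (hmeas measurableSet_Iio)]
  congr with x
  congr 1 with y
  simp [lt_sub_iff_add_lt']

theorem conv_Iio_le_conv_Iio {μ μ' ν ν' : Measure G} [SFinite μ] [SFinite μ'] [SFinite ν]
    [SFinite ν'] (hμ : ∀ t, μ (Iio t) ≤ μ' (Iio t)) (hν : ∀ t, ν (Iio t) ≤ ν' (Iio t)) (t : G) :
    (μ ∗ ν) (Iio t) ≤ (μ' ∗ ν') (Iio t) :=
  calc (μ ∗ ν) (Iio t)
    _ ≤ (μ ∗ ν') (Iio t) := by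
      simp only [conv_apply_Iio]
      exact lintegral_mono fun x ↦ hν _
    _ = (ν' ∗ μ) (Iio t) := by rw [Measure.conv_comm]
    _ ≤ (ν' ∗ μ') (Iio t) := by
      simp only [conv_apply_Iio]
      exact lintegral_mono fun x ↦ hμ _
    _ = (μ' ∗ ν') (Iio t) := by rw [Measure.conv_comm]

theorem convPow_Iio_le_convPow_Iio {μ ν : Measure G} [SFinite μ] [SFinite ν]
    (h : ∀ t, μ (Iio t) ≤ ν (Iio t)) (n : ℕ) (t : G) :
    convPow μ n (Iio t) ≤ convPow ν n (Iio t) := by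
  induction n generalizing t with
  | zero => rfl
  | succ n ih => exact conv_Iio_le_conv_Iio h ih t

end Domination

/-! ### Measures with polynomial distribution function -/

/-- Lebesgue measure on `[0, ∞)`. Its `n`-th convolution power measures the simplices
`{x ∈ [0, ∞)ⁿ | ∑ i, x i < t}`. -/
noncomputable def halfLine : Measure ℝ := volume.restrict (Ici 0)

instance : SFinite halfLine := inferInstanceAs (SFinite (volume.restrict (Ici 0)))

theorem convPow_halfLine_Iio_of_nonpos (n : ℕ) {t : ℝ} (ht : t ≤ 0) :
    convPow halfLine n (Iio t) = 0 := by
  induction n generalizing t with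
  | zero => simp [convPow, ht]
  | succ n ih =>
    rw [convPow, conv_apply_Iio, halfLine]
    exact setLIntegral_eq_zero measurableSet_Ici fun x hx ↦ ih (by linarith [mem_Ici.1 hx])

theorem integral_sub_pow_div_factorial (n : ℕ) (t : ℝ) :
    ∫ x in (0)..t, (t - x) ^ n / n ! = t ^ (n + 1) / (n + 1)! := by
  rw [intervalIntegral.integral_comp_sub_left (fun x ↦ x ^ n / (n ! : ℝ)) t,
    intervalIntegral.integral_div, integral_pow, Nat.factorial_succ]
  push_cast
  simp [div_div]

theorem convPow_halfLine_Iio_of_pos (n : ℕ) {t : ℝ} (ht : 0 < t) :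
    convPow halfLine n (Iio t) = ENNReal.ofReal (t ^ n / n !) := by
  induction n generalizing t with
  | zero => simp [convPow, ht]
  | succ n ih =>
    have hcut (x : ℝ) : (Ici 0).indicator (fun x ↦ convPow halfLine n (Iio (t - x))) x =
        (Ico 0 t).indicator (fun x ↦ ENNReal.ofReal ((t - x) ^ n / n !)) x := by
      rcases lt_or_ge x t with hxt | hxt
      · simp [indicator_apply, hxt, ih (sub_pos.2 hxt)]
      · simp [indicator_apply, hxt.not_gt, convPow_halfLine_Iio_of_nonpos n (sub_nonpos.2 hxt)]
    have hnonneg : ∀ x ∈ Ico 0 t, 0 ≤ (t - x) ^ n / (n ! : ℝ) := fun x hx ↦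
      div_nonneg (pow_nonneg (sub_nonneg.2 hx.2.le) n) (by positivity)
    have hlint : ∫⁻ x, convPow halfLine n (Iio (t - x)) ∂halfLine =
        ∫⁻ x in Ico 0 t, ENNReal.ofReal ((t - x) ^ n / n !) := by
      rw [← lintegral_indicator measurableSet_Ico, ← lintegral_congr hcut,
        lintegral_indicator measurableSet_Ici, halfLine]
    rw [convPow, conv_apply_Iio, hlint, ← ofReal_integral_eq_lintegral_ofReal,
      integral_Ico_eq_integral_Ioc, ← intervalIntegral.integral_of_le ht.le,
      integral_sub_pow_div_factorial]
    · exact (Continuous.integrableOn_Icc (by fun_prop)).mono_set Ico_subset_Icc_self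
    · exact ae_restrict_of_forall_mem measurableSet_Ico hnonneg

theorem volume_two_simplex {t : ℝ} (ht : 0 < t) :
    volume {p : ℝ × ℝ | 0 ≤ p.1 ∧ 0 ≤ p.2 ∧ p.1 + p.2 < t} = ENNReal.ofReal (t ^ 2 / 2) := by
  have hconv : convPow halfLine 2 = halfLine ∗ halfLine := by
    simp only [convPow, Measure.conv_dirac_zero]
  have hmeas : Measurable fun p : ℝ × ℝ ↦ p.1 + p.2 := measurable_add
  have hpow := convPow_halfLine_Iio_of_pos 2 ht
  rw [hconv, Measure.conv, Measure.map_apply hmeas measurableSet_Iio, halfLine,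
    Measure.prod_restrict, Measure.restrict_apply (hmeas measurableSet_Iio), Nat.factorial_two,
    Nat.cast_two] at hpow
  rw [← hpow, Measure.volume_eq_prod]
  congr 1 with p
  simp only [mem_ofPred_eq, mem_inter_iff, mem_preimage, mem_Iio, mem_prod, mem_Ici]
  tauto

section PolyMeasure

variable {ι κ : Type*} [Fintype ι] [Fintype κ]

/-- The combination `∑ i, c i • halfLine ^ (e i)` of convolution powers. For `c ≥ 0` its
distribution function on `(0, ∞)` is the polynomial `t ↦ ∑ i, c i * t ^ e i / (e i)!`. -/
noncomputable def polyMeasure (c : ι → ℝ) (e : ι → ℕ) : Measure ℝ :=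
  ∑ i, ENNReal.ofReal (c i) • convPow halfLine (e i)

instance (c : ι → ℝ) (e : ι → ℕ) : SFinite (polyMeasure c e) := by
  rw [polyMeasure, ← Measure.sum_fintype]
  infer_instance

theorem polyMeasure_Iio {c : ι → ℝ} (hc : ∀ i, 0 ≤ c i) (e : ι → ℕ) {t : ℝ} (ht : 0 < t) :
    polyMeasure c e (Iio t) = ENNReal.ofReal (∑ i, c i * (t ^ e i / (e i)!)) := by
  rw [ENNReal.ofReal_sum_of_nonneg fun i _ ↦ mul_nonneg (hc i) (by positivity)]
  simp [polyMeasure, convPow_halfLine_Iio_of_pos _ ht, ENNReal.ofReal_mul (hc _)]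

theorem polyMeasure_conv {c : ι → ℝ} (hc : ∀ i, 0 ≤ c i) (e : ι → ℕ) (d : κ → ℝ) (f : κ → ℕ) :
    polyMeasure c e ∗ polyMeasure d f =
      polyMeasure (fun p : ι × κ ↦ c p.1 * d p.2) fun p ↦ e p.1 + f p.2 := by
  refine Measure.ext_of_lintegral _ fun g hg ↦ ?_
  rw [Measure.lintegral_conv hg]
  simp only [polyMeasure, lintegral_finsetSum_measure, lintegral_smul_measure, smul_eq_mul,
    convPow_add, Measure.lintegral_conv hg, Fintype.sum_prod_type, ENNReal.ofReal_mul (hc _)]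
  refine Finset.sum_congr rfl fun i _ ↦ ?_
  rw [lintegral_finsetSum _ fun j _ ↦ by fun_prop, Finset.mul_sum]
  refine Finset.sum_congr rfl fun j _ ↦ ?_
  rw [lintegral_const_mul _ (by fun_prop), mul_assoc]

theorem polyMeasure_convPow_three {c : ι → ℝ} (hc : ∀ i, 0 ≤ c i) (e : ι → ℕ) :
    convPow (polyMeasure c e) 3 =
      polyMeasure (fun p : ι × ι × ι ↦ c p.1 * (c p.2.1 * c p.2.2))
        fun p ↦ e p.1 + (e p.2.1 + e p.2.2) := by
  simp only [convPow, Measure.conv_dirac_zero, polyMeasure_conv hc]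

end PolyMeasure

theorem measurePreserving_coordPairs (ι : Type*) [Fintype ι] :
    MeasurePreserving fun (p : EuclideanSpace ℝ ι × EuclideanSpace ℝ ι) i ↦ (p.1 i, p.2 i) :=
  (volume_measurePreserving_arrowProdEquivProdArrow ℝ ℝ ι).symm.comp
    ((PiLp.volume_preserving_ofLp ι).prod (PiLp.volume_preserving_ofLp ι))

theorem volume_coordPairs_sum_mem {M : Type*} [AddCommMonoid M] [MeasurableSpace M]
    [MeasurableAdd₂ M] (n : ℕ) {S : Set (ℝ × ℝ)} (hS : MeasurableSet S) (hfin : volume S ≠ ∞)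
    {g : ℝ × ℝ → M} (hg : Measurable g) {B : Set M} (hB : MeasurableSet B) :
    volume {p : EuclideanSpace ℝ (Fin n) × EuclideanSpace ℝ (Fin n) |
        (∀ i, (p.1 i, p.2 i) ∈ S) ∧ ∑ i, g (p.1 i, p.2 i) ∈ B} =
      convPow ((volume.restrict S).map g) n B := by
  have : IsFiniteMeasure (volume.restrict S) := isFiniteMeasure_restrict.2 hfin
  have hsum : Measurable fun q : Fin n → ℝ × ℝ ↦ ∑ i, g (q i) := by fun_prop
  have hpre : MeasurableSet ((fun q : Fin n → ℝ × ℝ ↦ ∑ i, g (q i)) ⁻¹' B) := hsum hB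
  rw [← map_sum_pi_eq_convPow, ← Measure.pi_map_pi fun _ ↦ hg.aemeasurable,
    Measure.map_map (by fun_prop) (by fun_prop), Function.comp_def, Measure.map_apply hsum hB,
    ← Measure.restrict_pi_pi, Measure.restrict_apply hpre, ← volume_pi,
    ← (measurePreserving_coordPairs (Fin n)).measure_preimage
      (hpre.inter (MeasurableSet.univ_pi fun _ ↦ hS)).nullMeasurableSet]
  congr with p
  simp [and_comm]

/-! ### The law of the defect in one coordinate -/

theorem volume_Icc_prod_lt_sub {a d : ℝ} (hd : 0 ≤ d) (hda : d < a) :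
    volume {p : ℝ × ℝ | p ∈ Icc 0 a ×ˢ Icc 0 a ∧ d < p.2 - p.1} =
      ENNReal.ofReal ((a - d) ^ 2 / 2) := by
  have hreflect : MeasurePreserving (Prod.map id (a - ·)) (volume : Measure (ℝ × ℝ)) volume :=
    (MeasurePreserving.id volume).prod (volume.measurePreserving_sub_left a)
  have hT : MeasurableSet {p : ℝ × ℝ | 0 ≤ p.1 ∧ 0 ≤ p.2 ∧ p.1 + p.2 < a - d} := by
    measurability
  rw [← volume_two_simplex (sub_pos.2 hda), ← hreflect.measure_preimage hT.nullMeasurableSet]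
  congr with p
  simp only [mem_prod, mem_Icc, mem_ofPred_eq, Prod.map_fst, Prod.map_snd, id]
  grind

theorem volume_Icc_prod_lt_abs_sub {a d : ℝ} (hd : 0 ≤ d) (hda : d < a) :
    volume {p : ℝ × ℝ | p ∈ Icc 0 a ×ˢ Icc 0 a ∧ d < |p.1 - p.2|} =
      ENNReal.ofReal ((a - d) ^ 2) := by
  set T : Set (ℝ × ℝ) := {p | p ∈ Icc 0 a ×ˢ Icc 0 a ∧ d < p.2 - p.1} with hT_def
  have hT : MeasurableSet T :=
    (measurableSet_Icc.prod measurableSet_Icc).inter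
      (measurableSet_lt measurable_const (measurable_snd.sub measurable_fst))
  have hsplit : {p : ℝ × ℝ | p ∈ Icc 0 a ×ˢ Icc 0 a ∧ d < |p.1 - p.2|} =
      T ∪ Prod.swap ⁻¹' T := by
    ext p
    simp only [hT_def, mem_ofPred_eq, mem_union, mem_preimage, Prod.fst_swap, Prod.snd_swap,
      mem_prod, lt_abs, neg_sub]
    tauto
  have hdisj : Disjoint T (Prod.swap ⁻¹' T) :=
    Set.disjoint_left.2 fun p hp hp' ↦ by
      have h₁ : d < p.2 - p.1 := hp.2
      have h₂ : d < p.1 - p.2 := hp'.2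
      linarith
  have hswap : MeasurePreserving Prod.swap (volume : Measure (ℝ × ℝ)) volume :=
    Measure.measurePreserving_swap
  rw [hsplit, measure_union hdisj (measurable_swap hT),
    hswap.measure_preimage hT.nullMeasurableSet, volume_Icc_prod_lt_sub hd hda,
    ← ENNReal.ofReal_add (by positivity) (by positivity), add_halves]

/-- The law of `1 - ((x - y) / a) ^ 2` for `(x, y)` in the square `[0, a]²` with Lebesgue measure;
its total mass is `a ^ 2`. -/
noncomputable def defectLaw (a : ℝ) : Measure ℝ :=
  (volume.restrict (Icc 0 a ×ˢ Icc 0 a)).map fun p : ℝ × ℝ ↦ 1 - ((p.1 - p.2) / a) ^ 2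

theorem defectLaw_univ (a : ℝ) : defectLaw a univ = ENNReal.ofReal a ^ 2 := by
  rw [defectLaw, Measure.map_apply (by fun_prop) MeasurableSet.univ, preimage_univ,
    Measure.restrict_apply_univ, Measure.volume_eq_prod, Measure.prod_prod, Real.volume_Icc,
    sub_zero, sq]

instance (a : ℝ) : IsFiniteMeasure (defectLaw a) :=
  ⟨by rw [defectLaw_univ]; finiteness⟩

theorem defectLaw_Iio_of_nonpos (a : ℝ) {t : ℝ} (ht : t ≤ 0) : defectLaw a (Iio t) = 0 := by
  have h : ∀ p ∈ Icc 0 a ×ˢ Icc 0 a, t ≤ 1 - ((p.1 - p.2) / a) ^ 2 := by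
    rintro ⟨x, y⟩ ⟨hx, hy⟩
    have hle : |(x - y) / a| ≤ 1 := by
      rw [abs_div, abs_of_nonneg (hx.1.trans hx.2)]
      exact div_le_one_of_le₀ (abs_sub_le_of_nonneg_of_le hx.1 hx.2 hy.1 hy.2) (hx.1.trans hx.2)
    linarith [(sq_le_one_iff_abs_le_one _).2 hle]
  have hempty : (fun p : ℝ × ℝ ↦ 1 - ((p.1 - p.2) / a) ^ 2) ⁻¹' Iio t ∩ Icc 0 a ×ˢ Icc 0 a = ∅ :=
    eq_empty_of_forall_notMem fun p hp ↦ (h p hp.2).not_gt hp.1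
  rw [defectLaw, Measure.map_apply (by fun_prop) measurableSet_Iio,
    Measure.restrict_apply' (measurableSet_Icc.prod measurableSet_Icc), hempty, measure_empty]

theorem defectLaw_Iio {a t : ℝ} (ha : 0 < a) (ht₀ : 0 < t) (ht₁ : t ≤ 1) :
    defectLaw a (Iio t) = ENNReal.ofReal (a ^ 2 * (1 - √(1 - t)) ^ 2) := by
  have hmeas : Measurable fun p : ℝ × ℝ ↦ 1 - ((p.1 - p.2) / a) ^ 2 := by fun_prop
  have hiff (p : ℝ × ℝ) : 1 - ((p.1 - p.2) / a) ^ 2 < t ↔ a * √(1 - t) < |p.1 - p.2| := by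
    rw [sub_lt_comm, ← Real.sqrt_lt_sqrt_iff (sub_nonneg.2 ht₁), Real.sqrt_sq_eq_abs, abs_div,
      abs_of_pos ha, lt_div_iff₀' ha]
  have hlt : a * √(1 - t) < a :=
    mul_lt_of_lt_one_right ha (by rw [Real.sqrt_lt' one_pos]; linarith)
  have harea := volume_Icc_prod_lt_abs_sub (by positivity) hlt
  rw [defectLaw, Measure.map_apply hmeas measurableSet_Iio,
    Measure.restrict_apply (hmeas measurableSet_Iio), ← mul_pow, mul_one_sub, ← harea]
  congr 1 with p
  simp only [mem_inter_iff, mem_preimage, mem_Iio, mem_ofPred_eq, hiff, and_comm]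

theorem one_sub_sq_le_poly {r : ℝ} (h₀ : 0 ≤ r) (h₁ : r ≤ 1) :
    (1 - r) ^ 2 ≤
      (1 - r ^ 2) ^ 2 / 4 + (1 - r ^ 2) ^ 3 / 6 + 7 * (1 - r ^ 2) ^ 6 / 12 := by
  have : 0 ≤ 1 - r := sub_nonneg.2 h₁
  -- the difference has nonnegative coefficients in the Bernstein basis `(1 - r) ^ i * r ^ j`
  have hdiff : 0 ≤ r * (1 - r) ^ 3 * (24 * (1 - r) ^ 9 + 222 * (1 - r) ^ 8 * r +
      858 * (1 - r) ^ 7 * r ^ 2 + 1764 * (1 - r) ^ 6 * r ^ 3 + 2016 * (1 - r) ^ 5 * r ^ 4 +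
      1190 * (1 - r) ^ 4 * r ^ 5 + 266 * (1 - r) ^ 3 * r ^ 6 + 3 * (1 - r) ^ 2 * r ^ 7 +
      19 * (1 - r) * r ^ 8 + 4 * r ^ 9) / 12 := by
    positivity
  linear_combination hdiff

/-- The measure with distribution function `a ^ 2 * (t ^ 2 / 4 + t ^ 3 / 6 + 7 * t ^ 6 / 12)` on
`(0, ∞)`, which majorizes that of `defectLaw a`. -/
noncomputable def defectMajorant (a : ℝ) : Measure ℝ :=
  polyMeasure ![a ^ 2 / 2, a ^ 2, 420 * a ^ 2] ![2, 3, 6]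

instance (a : ℝ) : SFinite (defectMajorant a) := inferInstanceAs (SFinite (polyMeasure _ _))

theorem defectMajorant_coeff_nonneg (a : ℝ) (i : Fin 3) :
    0 ≤ ![a ^ 2 / 2, a ^ 2, 420 * a ^ 2] i :=
  match i with
  | 0 => show 0 ≤ a ^ 2 / 2 by positivity
  | 1 => sq_nonneg a
  | 2 => show 0 ≤ 420 * a ^ 2 by positivity

theorem defectMajorant_Iio (a : ℝ) {t : ℝ} (ht : 0 < t) :
    defectMajorant a (Iio t) =
      ENNReal.ofReal (a ^ 2 * (t ^ 2 / 4 + t ^ 3 / 6 + 7 * t ^ 6 / 12)) := by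
  rw [defectMajorant, polyMeasure_Iio (defectMajorant_coeff_nonneg a) _ ht]
  congr 1
  simp only [Fin.sum_univ_three, Matrix.cons_val, Nat.factorial]
  push_cast
  ring

theorem defectLaw_Iio_le_defectMajorant_Iio {a : ℝ} (ha : 0 < a) (t : ℝ) :
    defectLaw a (Iio t) ≤ defectMajorant a (Iio t) := by
  rcases le_or_gt t 0 with ht₀ | ht₀
  · simp [defectLaw_Iio_of_nonpos a ht₀]
  rw [defectMajorant_Iio a ht₀]
  rcases le_or_gt t 1 with ht₁ | ht₁
  · have hpoly := one_sub_sq_le_poly (sqrt_nonneg (1 - t)) (by simp [ht₀.le])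
    rw [Real.sq_sqrt (sub_nonneg.2 ht₁), sub_sub_cancel] at hpoly
    rw [defectLaw_Iio ha ht₀ ht₁]
    gcongr
  · have hpoly : 1 ≤ t ^ 2 / 4 + t ^ 3 / 6 + 7 * t ^ 6 / 12 := by
      linarith [one_le_pow₀ ht₁.le (n := 2), one_le_pow₀ ht₁.le (n := 3),
        one_le_pow₀ ht₁.le (n := 6)]
    calc defectLaw a (Iio t)
      _ ≤ ENNReal.ofReal (a ^ 2) := by
        rw [ENNReal.ofReal_pow ha.le, ← defectLaw_univ]
        exact measure_mono (subset_univ _)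
      _ ≤ ENNReal.ofReal (a ^ 2 * (t ^ 2 / 4 + t ^ 3 / 6 + 7 * t ^ 6 / 12)) :=
        ENNReal.ofReal_le_ofReal (le_mul_of_one_le_right (sq_nonneg a) hpoly)

theorem convPow_defectMajorant_three_Iio_one_lt {a : ℝ} (ha : 0 < a) :
    convPow (defectMajorant a) 3 (Iio 1) < ENNReal.ofReal (0.0005 * a ^ 6) := by
  have hc := defectMajorant_coeff_nonneg a
  rw [defectMajorant, polyMeasure_convPow_three hc,
    polyMeasure_Iio (fun p ↦ mul_nonneg (hc _) (mul_nonneg (hc _) (hc _))) _ one_pos,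
    ENNReal.ofReal_lt_ofReal_iff (by positivity)]
  simp only [Fintype.sum_prod_type, Fin.sum_univ_three, Matrix.cons_val, Nat.factorial, one_pow]
  push_cast
  linarith [pow_pos ha 6]

theorem sum_one_sub_div_sq {ι : Type*} [Fintype ι] (x y : EuclideanSpace ℝ ι) (a : ℝ) :
    ∑ i, (1 - ((x i - y i) / a) ^ 2) = Fintype.card ι - (dist x y / a) ^ 2 := by
  simp [div_pow, EuclideanSpace.dist_sq_eq, Real.dist_eq, Finset.sum_div]

theorem sqrt_two_mul_lt_dist_iff {a : ℝ} (ha : 0 < a) (x y : EuclideanSpace ℝ (Fin 3)) :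
    √2 * a < dist x y ↔ ∑ i, (1 - ((x i - y i) / a) ^ 2) < 1 := by
  rw [sum_one_sub_div_sq, Fintype.card_fin, ← lt_div_iff₀ ha,
    ← Real.sqrt_sq (div_nonneg dist_nonneg ha.le), Real.sqrt_lt_sqrt_iff zero_le_two,
    Real.sqrt_sq (div_nonneg dist_nonneg ha.le)]
  constructor <;> intro h <;> norm_num at h ⊢ <;> linarith

theorem volume_pairs_dist_gt_sqrt_two (a : ℝ) (ha : 0 < a) :
    volume {p : EuclideanSpace ℝ (Fin 3) × EuclideanSpace ℝ (Fin 3) |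
        p.1 ∈ cube a ∧ p.2 ∈ cube a ∧ Real.sqrt 2 * a < dist p.1 p.2} <
      ENNReal.ofReal (0.0005 * a ^ 6) := by
  have hset : {p : EuclideanSpace ℝ (Fin 3) × EuclideanSpace ℝ (Fin 3) |
        p.1 ∈ cube a ∧ p.2 ∈ cube a ∧ Real.sqrt 2 * a < dist p.1 p.2} =
      {p | (∀ i, (p.1 i, p.2 i) ∈ Icc 0 a ×ˢ Icc 0 a) ∧
        ∑ i, (1 - ((p.1 i - p.2 i) / a) ^ 2) ∈ Iio 1} := by
    ext p
    simp only [cube, mem_ofPred_eq, mem_prod, forall_and, sqrt_two_mul_lt_dist_iff ha, mem_Iio,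
      and_assoc]
  have hfin : volume (Icc 0 a ×ˢ Icc 0 a) ≠ ∞ := (isCompact_Icc.prod isCompact_Icc).measure_ne_top
  rw [hset]
  calc volume _
    _ = convPow (defectLaw a) 3 (Iio 1) :=
      volume_coordPairs_sum_mem 3 (measurableSet_Icc.prod measurableSet_Icc) hfin
        (g := fun p ↦ 1 - ((p.1 - p.2) / a) ^ 2) (by fun_prop) measurableSet_Iio
    _ ≤ convPow (defectMajorant a) 3 (Iio 1) :=
      convPow_Iio_le_convPow_Iio (defectLaw_Iio_le_defectMajorant_Iio ha) 3 1
    _ < ENNReal.ofReal (0.0005 * a ^ 6) := convPow_defectMajorant_three_Iio_one_lt ha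
end

section
/- For every l with 0 ≤ l ≤ a, the iterated integral ∫₀^{π/2} ∫₀^{π/2} (a − l·cosθ·cosφ)(a − l·cosθ·sinφ)(a − l·sinθ)·l²·cosθ dφ dθ equals (l²/8)·(4πa³ − 6πa²l + 8al² − l³). -/
open MeasureTheory Real Set intervalIntegral

/-!
Put `u = (cos θ cos φ, cos θ sin φ, sin θ)`, a point of the positive octant of the unit sphere,
whose area element is `cos θ dθ dφ`. Over the octant `1`, `uᵢ`, `uᵢ uⱼ` (`i ≠ j`) and `u₁ u₂ u₃`
integrate to `π / 2`, `π / 4`, `1 / 3` and `1 / 8`, so `(a - l u₁) (b - l u₂) (c - l u₃)` integrates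
to a cubic in `l` whose coefficients are, up to sign, these moments times the elementary symmetric
functions of `a`, `b`, `c`.
-/

theorem integral_const_sub_cos_mul_const_sub_sin (p q r s : ℝ) :
    ∫ φ in (0:ℝ)..(π / 2), (p - r * cos φ) * (q - s * sin φ) =
      π / 2 * (p * q) - p * s - q * r + r * s / 2 := by
  have expand (φ : ℝ) : (p - r * cos φ) * (q - s * sin φ) =
      p * q - p * s * sin φ - q * r * cos φ + r * s * (sin φ * cos φ) := by ring
  simp (disch := exact Continuous.intervalIntegrable (by fun_prop) _ _) only
    [expand, intervalIntegral.integral_add, intervalIntegral.integral_sub,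
      intervalIntegral.integral_const_mul, intervalIntegral.integral_const, integral_sin,
      integral_cos, integral_sin_mul_cos₁, sin_pi_div_two, cos_pi_div_two, sin_zero, cos_zero,
      smul_eq_mul]
  ring

theorem integral_sin_mul_cos_pow (n : ℕ) (x y : ℝ) :
    ∫ θ in x..y, sin θ * cos θ ^ n = (cos x ^ (n + 1) - cos y ^ (n + 1)) / (n + 1) := by
  simpa using integral_sin_pow_odd_mul_cos_pow (a := x) (b := y) 0 n

theorem integral_quadratic_cos_mul_cos (p q r : ℝ) :
    ∫ θ in (0:ℝ)..(π / 2), (p + q * cos θ + r * cos θ ^ 2) * cos θ =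
      p + π / 4 * q + 2 / 3 * r := by
  have expand (θ : ℝ) : (p + q * cos θ + r * cos θ ^ 2) * cos θ =
      p * cos θ + q * cos θ ^ 2 + r * cos θ ^ 3 := by ring
  simp (disch := exact Continuous.intervalIntegrable (by fun_prop) _ _) only
    [expand, intervalIntegral.integral_add, intervalIntegral.integral_const_mul, integral_cos,
      integral_cos_sq, integral_cos_pow_three, sin_pi_div_two, cos_pi_div_two, sin_zero,
      cos_zero]
  ring

theorem integral_quadratic_cos_mul_sin_mul_cos (p q r : ℝ) :
    ∫ θ in (0:ℝ)..(π / 2), (p + q * cos θ + r * cos θ ^ 2) * (sin θ * cos θ) =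
      p / 2 + q / 3 + r / 4 := by
  have expand (θ : ℝ) : (p + q * cos θ + r * cos θ ^ 2) * (sin θ * cos θ) =
      p * (sin θ * cos θ ^ 1) + q * (sin θ * cos θ ^ 2) + r * (sin θ * cos θ ^ 3) := by ring
  simp (disch := exact Continuous.intervalIntegrable (by fun_prop) _ _) only
    [expand, intervalIntegral.integral_add, intervalIntegral.integral_const_mul,
      integral_sin_mul_cos_pow, cos_pi_div_two, cos_zero]
  push_cast
  ring

theorem integral_quadratic_cos_mul_const_sub_sin_mul_cos (p q r c l : ℝ) :
    ∫ θ in (0:ℝ)..(π / 2), (p + q * cos θ + r * cos θ ^ 2) * (c - l * sin θ) * cos θ =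
      c * (p + π / 4 * q + 2 / 3 * r) - l * (p / 2 + q / 3 + r / 4) := by
  have split (θ : ℝ) : (p + q * cos θ + r * cos θ ^ 2) * (c - l * sin θ) * cos θ =
      c * ((p + q * cos θ + r * cos θ ^ 2) * cos θ) -
        l * ((p + q * cos θ + r * cos θ ^ 2) * (sin θ * cos θ)) := by ring
  simp (disch := exact Continuous.intervalIntegrable (by fun_prop) _ _) only
    [split, intervalIntegral.integral_sub, intervalIntegral.integral_const_mul,
      integral_quadratic_cos_mul_cos, integral_quadratic_cos_mul_sin_mul_cos]

theorem angular_integral_first_range_general (a b c l : ℝ) :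
    (∫ θ in (0:ℝ)..(π / 2), ∫ φ in (0:ℝ)..(π / 2),
        (a - l * cos θ * cos φ) * (b - l * cos θ * sin φ) * (c - l * sin θ) * l ^ 2 * cos θ) =
      l ^ 2 * (π / 2 * (a * b * c) - π / 4 * (a * b + b * c + c * a) * l +
        (a + b + c) / 3 * l ^ 2 - l ^ 3 / 8) := by
  have integral_azimuth (θ : ℝ) :
      ∫ φ in (0:ℝ)..(π / 2),
        (a - l * cos θ * cos φ) * (b - l * cos θ * sin φ) * (c - l * sin θ) * l ^ 2 * cos θ =
      l ^ 2 * ((π / 2 * (a * b) + -(a + b) * l * cos θ + l ^ 2 / 2 * cos θ ^ 2) *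
        (c - l * sin θ) * cos θ) := by
    simp only [intervalIntegral.integral_mul_const, integral_const_sub_cos_mul_const_sub_sin]
    ring
  simp only [integral_azimuth, intervalIntegral.integral_const_mul,
    integral_quadratic_cos_mul_const_sub_sin_mul_cos]
  ring

theorem angular_integral_first_range (a : ℝ) (ha : 0 < a) (l : ℝ)
    (hl0 : 0 ≤ l) (hla : l ≤ a) :
    (∫ θ in (0:ℝ)..(π / 2), ∫ φ in (0:ℝ)..(π / 2),
        (a - l * Real.cos θ * Real.cos φ) * (a - l * Real.cos θ * Real.sin φ) *
          (a - l * Real.sin θ) * l ^ 2 * Real.cos θ) =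
      l ^ 2 / 8 * (4 * π * a ^ 3 - 6 * π * a ^ 2 * l + 8 * a * l ^ 2 - l ^ 3) := by
  rw [angular_integral_first_range_general]
  ring
end

section
/- For every l with a < l < √2·a, writing φ₁(θ) = arccos(a/(l·cosθ)) and φ₂(θ) = arcsin(a/(l·cosθ)), the sum of iterated integrals l²·[ ∫_{arccos(a/l)}^{arcsin(a/l)} cosθ·(a − l·sinθ)·( ∫₀^{π/2} (a − l·cosθ·cosφ)(a − l·cosθ·sinφ) dφ ) dθ + ∫₀^{arccos(a/l)} cosθ·(a − l·sinθ)·( ∫_{φ₁(θ)}^{φ₂(θ)} (a − l·cosθ·cosφ)(a − l·cosθ·sinφ) dφ ) dθ ] equals (l/8)·[2l⁴ + 6a²l² − a⁴ − 2πa³(4l − 3a) − 8a(2l² + a²)·√(l² − a²) + 24a²l²·arccos(a/l)]. -/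
open MeasureTheory Real Set intervalIntegral

/-!
The integrand `(a - r cos φ)(a - r sin φ)` vanishes at `φ = arccos (a / r)` and at
`φ = arcsin (a / r)`, so differentiating its integral `J r` between these moving endpoints produces
no boundary terms, and `J' r = 2 a √(r² - a²) / r - r` is free of inverse trigonometric functions.
The second double integral, with `r = l cos θ`, is therefore integrated by parts against the
primitive `a sin θ + (l / 2) cos² θ` of `cos θ (a - l sin θ)`. What remains is elementary except for
`∫ sin² θ √(l² cos² θ - a²) / cos θ = π (l - a)² / (4 l)`. In the first double integral the inner
integral is a quadratic polynomial in `cos θ`.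
-/

variable {a l r θ : ℝ}

lemma hasDerivAt_arcsin_of_sq_add_sq_eq_one {f : ℝ → ℝ} {f' x w : ℝ} (hf : HasDerivAt f f' x)
    (hw : 0 < w) (h : f x ^ 2 + w ^ 2 = 1) : HasDerivAt (fun y ↦ arcsin (f y)) (f' / w) x := by
  have hsqrt : √(1 - f x ^ 2) = w := by rw [← h, add_sub_cancel_left, sqrt_sq hw.le]
  have hlt : |f x| < 1 := (sq_lt_one_iff_abs_lt_one _).1 (by nlinarith)
  convert! (hasDerivAt_arcsin (abs_lt.1 hlt).1.ne' (abs_lt.1 hlt).2.ne).comp x hf using 1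
  rw [hsqrt]
  ring

lemma cos_arccos_div (ha : 0 < a) (hr : a ≤ r) : cos (arccos (a / r)) = a / r := by
  have hr0 : 0 < r := ha.trans_le hr
  exact cos_arccos (by linarith [div_pos ha hr0]) ((div_le_one hr0).2 hr)

lemma sin_arccos_div (hr : 0 < r) : sin (arccos (a / r)) = √(r ^ 2 - a ^ 2) / r := by
  rw [sin_arccos, show 1 - (a / r) ^ 2 = (r ^ 2 - a ^ 2) / r ^ 2 by field_simp,
    sqrt_div' _ (sq_nonneg r), sqrt_sq hr.le]

lemma hasDerivAt_arccos_const_div (hr : 0 < r) (h : a ^ 2 < r ^ 2) :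
    HasDerivAt (fun y ↦ arccos (a / y)) (a / (r * √(r ^ 2 - a ^ 2))) r := by
  have hpos : 0 < r ^ 2 - a ^ 2 := sub_pos.2 h
  have hdiv : HasDerivAt (fun y ↦ a / y) (-a / r ^ 2) r := by
    simpa using! (hasDerivAt_const r a).fun_div (hasDerivAt_id r) hr.ne'
  have hsq : (a / r) ^ 2 + (√(r ^ 2 - a ^ 2) / r) ^ 2 = 1 := by
    rw [div_pow √_, sq_sqrt hpos.le]
    field_simp
    ring
  convert! (hasDerivAt_arcsin_of_sq_add_sq_eq_one hdiv (by positivity) hsq).const_sub (π / 2)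
    using 1
  field_simp

lemma hasDerivAt_sqrt_sq_sub_sq (h : a ^ 2 < r ^ 2) :
    HasDerivAt (fun y ↦ √(y ^ 2 - a ^ 2)) (r / √(r ^ 2 - a ^ 2)) r := by
  convert! (((hasDerivAt_id r).fun_pow 2).sub_const (a ^ 2)).sqrt (sub_pos.2 h).ne' using 1
  simp only [id_eq]
  push_cast
  field_simp

lemma integral_sub_mul_cos_mul_sub_mul_sin (a r p q : ℝ) :
    ∫ φ in p..q, (a - r * cos φ) * (a - r * sin φ) =
      a ^ 2 * (q - p) - a * r * (sin q - sin p) + a * r * (cos q - cos p) +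
        r ^ 2 / 2 * (sin q ^ 2 - sin p ^ 2) := by
  have hderiv (x : ℝ) : HasDerivAt
      (fun φ ↦ a ^ 2 * φ - a * r * sin φ + a * r * cos φ + r ^ 2 / 2 * sin φ ^ 2)
      ((a - r * cos x) * (a - r * sin x)) x := by
    convert! ((((hasDerivAt_id x).const_mul (a ^ 2)).fun_sub
      ((hasDerivAt_sin x).const_mul (a * r))).fun_add
      ((hasDerivAt_cos x).const_mul (a * r))).fun_add
      (((hasDerivAt_sin x).fun_pow 2).const_mul (r ^ 2 / 2)) using 1
    push_cast
    ring
  rw [integral_eq_sub_of_hasDerivAt (fun x _ ↦ hderiv x)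
    (Continuous.intervalIntegrable (by fun_prop) _ _)]
  ring

lemma integral_zero_pi_div_two_sub_mul_cos_mul_sub_mul_sin (a r : ℝ) :
    ∫ φ in 0..π / 2, (a - r * cos φ) * (a - r * sin φ) =
      π / 2 * a ^ 2 - 2 * a * r + r ^ 2 / 2 := by
  rw [integral_sub_mul_cos_mul_sub_mul_sin, sin_pi_div_two, cos_pi_div_two, sin_zero, cos_zero]
  ring

lemma integral_cos_mul_sub_sin_mul_quadratic_cos (a l A B C p q : ℝ) :
    ∫ θ in p..q, cos θ * (a - l * sin θ) * (A + B * cos θ + C * cos θ ^ 2) =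
      a * A * (sin q - sin p) + a * B / 2 * (sin q * cos q - sin p * cos p + q - p) +
        a * C * ((sin q - sin q ^ 3 / 3) - (sin p - sin p ^ 3 / 3)) +
        l * A / 2 * (cos q ^ 2 - cos p ^ 2) + l * B / 3 * (cos q ^ 3 - cos p ^ 3) +
        l * C / 4 * (cos q ^ 4 - cos p ^ 4) := by
  have hderiv (x : ℝ) : HasDerivAt
      (fun θ ↦ a * A * sin θ + a * B / 2 * (sin θ * cos θ + θ) + a * C * (sin θ - sin θ ^ 3 / 3) +
        l * A / 2 * cos θ ^ 2 + l * B / 3 * cos θ ^ 3 + l * C / 4 * cos θ ^ 4)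
      (cos x * (a - l * sin x) * (A + B * cos x + C * cos x ^ 2)) x := by
    have hS := hasDerivAt_sin x
    have hC := hasDerivAt_cos x
    convert! (((((hS.const_mul (a * A)).fun_add
      (((hS.fun_mul hC).fun_add (hasDerivAt_id x)).const_mul (a * B / 2))).fun_add
      ((hS.fun_sub ((hS.fun_pow 3).div_const 3)).const_mul (a * C))).fun_add
      ((hC.fun_pow 2).const_mul (l * A / 2))).fun_add
      ((hC.fun_pow 3).const_mul (l * B / 3))).fun_add
      ((hC.fun_pow 4).const_mul (l * C / 4)) using 1
    push_cast
    linear_combination (a * B / 2 + a * C * cos x) * sin_sq_add_cos_sq x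
  rw [integral_eq_sub_of_hasDerivAt (fun x _ ↦ hderiv x)
    (Continuous.intervalIntegrable (by fun_prop) _ _)]
  ring

/-- The integral over the azimuths `φ` in `[0, π / 2]` for which neither `r cos φ` nor `r sin φ`
exceeds `a`; for `a ≤ r ≤ √2 a` they form the interval below. In the theorem `r = l cos θ`. For
`r > √2 a` the endpoints are reversed and the oriented integral continues the same closed form. -/
noncomputable def clippedAzimuthIntegral (a r : ℝ) : ℝ :=
  ∫ φ in arccos (a / r)..arcsin (a / r), (a - r * cos φ) * (a - r * sin φ)

lemma clippedAzimuthIntegral_eq (ha : 0 < a) (hr : a ≤ r) :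
    clippedAzimuthIntegral a r =
      π / 2 * a ^ 2 - 2 * a ^ 2 * arccos (a / r) - a ^ 2 + 2 * a * √(r ^ 2 - a ^ 2) -
        r ^ 2 / 2 := by
  have hr0 : 0 < r := ha.trans_le hr
  have hsq : √(r ^ 2 - a ^ 2) ^ 2 = r ^ 2 - a ^ 2 := sq_sqrt (by nlinarith)
  rw [clippedAzimuthIntegral, integral_sub_mul_cos_mul_sub_mul_sin,
    arcsin_eq_pi_div_two_sub_arccos, sin_pi_div_two_sub, cos_pi_div_two_sub, cos_arccos_div ha hr,
    sin_arccos_div hr0]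
  field_simp
  linear_combination (-1) * hsq

lemma clippedAzimuthIntegral_self (ha : 0 < a) :
    clippedAzimuthIntegral a a = (π - 3) / 2 * a ^ 2 := by
  rw [clippedAzimuthIntegral_eq ha le_rfl, div_self ha.ne', arccos_one, sub_self, sqrt_zero]
  ring

lemma continuousOn_clippedAzimuthIntegral (ha : 0 < a) :
    ContinuousOn (clippedAzimuthIntegral a) (Ici a) := by
  refine ContinuousOn.congr ?_ fun r hr ↦ clippedAzimuthIntegral_eq ha hr
  have hne : ∀ r ∈ Ici a, r ≠ 0 := fun r hr ↦ (ha.trans_le hr).ne'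
  fun_prop (disch := assumption)

lemma hasDerivAt_clippedAzimuthIntegral (ha : 0 < a) (hr : a < r) :
    HasDerivAt (clippedAzimuthIntegral a) (2 * a * √(r ^ 2 - a ^ 2) / r - r) r := by
  have hr0 : 0 < r := ha.trans hr
  have hsq_lt : a ^ 2 < r ^ 2 := pow_lt_pow_left₀ hr ha.le two_ne_zero
  have hpos : 0 < r ^ 2 - a ^ 2 := sub_pos.2 hsq_lt
  have hclosed := (((((hasDerivAt_arccos_const_div hr0 hsq_lt).const_mul (2 * a ^ 2)).const_sub
    (π / 2 * a ^ 2)).sub_const (a ^ 2)).fun_add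
    ((hasDerivAt_sqrt_sq_sub_sq hsq_lt).const_mul (2 * a))).fun_sub
    (((hasDerivAt_id r).fun_pow 2).div_const 2)
  have heq := (eventually_gt_nhds hr).mono fun y hy ↦ clippedAzimuthIntegral_eq ha hy.le
  convert! hclosed.congr_of_eventuallyEq heq using 1
  simp only [id_eq]
  push_cast
  field_simp
  linear_combination 2 * a * sq_sqrt hpos.le

lemma le_mul_cos_of_mem_Icc_arccos (ha : 0 < a) (hl : a ≤ l) (hθ : θ ∈ Icc 0 (arccos (a / l))) :
    a ≤ l * cos θ := by
  have hl0 : 0 < l := ha.trans_le hl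
  have hcos := cos_le_cos_of_nonneg_of_le_pi hθ.1 (arccos_le_pi _) hθ.2
  rwa [cos_arccos_div ha hl, div_le_iff₀' hl0] at hcos

lemma lt_mul_cos_of_mem_Ioo_arccos (ha : 0 < a) (hl : a ≤ l) (hθ : θ ∈ Ioo 0 (arccos (a / l))) :
    a < l * cos θ := by
  have hl0 : 0 < l := ha.trans_le hl
  have hcos := cos_lt_cos_of_nonneg_of_le_pi hθ.1.le (arccos_le_pi _) hθ.2
  rwa [cos_arccos_div ha hl, div_lt_iff₀' hl0] at hcos

lemma cos_pos_of_mem_Icc_arccos (ha : 0 < a) (hl : a ≤ l) (hθ : θ ∈ Icc 0 (arccos (a / l))) :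
    0 < cos θ :=
  pos_of_mul_pos_right (ha.trans_le (le_mul_cos_of_mem_Icc_arccos ha hl hθ)) (ha.trans_le hl).le

lemma continuousOn_sqrt_div_cos (ha : 0 < a) (hl : a ≤ l) :
    ContinuousOn (fun θ ↦ √((l * cos θ) ^ 2 - a ^ 2) / cos θ) (Icc 0 (arccos (a / l))) :=
  ContinuousOn.div (by fun_prop) (by fun_prop)
    fun _ hθ ↦ (cos_pos_of_mem_Icc_arccos ha hl hθ).ne'

lemma hasDerivAt_sqrt_mul_cos_sq_sub_sq (h : a ^ 2 < (l * cos θ) ^ 2) :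
    HasDerivAt (fun θ ↦ √((l * cos θ) ^ 2 - a ^ 2))
      (-(l ^ 2 * cos θ * sin θ) / √((l * cos θ) ^ 2 - a ^ 2)) θ := by
  convert! (hasDerivAt_sqrt_sq_sub_sq h).comp θ ((hasDerivAt_cos θ).const_mul l) using 1
  ring

lemma sq_lt_sq_of_lt_mul_cos_sq (h : a ^ 2 < (l * cos θ) ^ 2) : a ^ 2 < l ^ 2 := by
  rw [mul_pow] at h
  exact h.trans_le (mul_le_of_le_one_right (sq_nonneg l) (cos_sq_le_one θ))

lemma hasDerivAt_arcsin_mul_sin_div (h : a ^ 2 < (l * cos θ) ^ 2) :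
    HasDerivAt (fun θ ↦ arcsin (l * sin θ / √(l ^ 2 - a ^ 2)))
      (l * cos θ / √((l * cos θ) ^ 2 - a ^ 2)) θ := by
  have hb : 0 < l ^ 2 - a ^ 2 := sub_pos.2 (sq_lt_sq_of_lt_mul_cos_sq h)
  have hs : 0 < (l * cos θ) ^ 2 - a ^ 2 := sub_pos.2 h
  convert! hasDerivAt_arcsin_of_sq_add_sq_eq_one
    (w := √((l * cos θ) ^ 2 - a ^ 2) / √(l ^ 2 - a ^ 2))
    (((hasDerivAt_sin θ).const_mul l).div_const √(l ^ 2 - a ^ 2)) (by positivity) ?_ using 1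
  · field_simp
  · rw [div_pow, div_pow, sq_sqrt hb.le, sq_sqrt hs.le]
    field_simp
    linear_combination l ^ 2 * sin_sq_add_cos_sq θ

lemma hasDerivAt_arcsin_mul_tan_div (hc : 0 < cos θ) (h : a ^ 2 < (l * cos θ) ^ 2) :
    HasDerivAt (fun θ ↦ arcsin (a * tan θ / √(l ^ 2 - a ^ 2)))
      (a / (cos θ * √((l * cos θ) ^ 2 - a ^ 2))) θ := by
  have hb : 0 < l ^ 2 - a ^ 2 := sub_pos.2 (sq_lt_sq_of_lt_mul_cos_sq h)
  have hs : 0 < (l * cos θ) ^ 2 - a ^ 2 := sub_pos.2 h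
  convert! hasDerivAt_arcsin_of_sq_add_sq_eq_one
    (w := √((l * cos θ) ^ 2 - a ^ 2) / (√(l ^ 2 - a ^ 2) * cos θ))
    (((hasDerivAt_tan hc.ne').const_mul a).div_const √(l ^ 2 - a ^ 2)) (by positivity) ?_ using 1
  · field_simp
  · rw [div_pow, div_pow, mul_pow √_, sq_sqrt hb.le, sq_sqrt hs.le, tan_eq_sin_div_cos]
    field_simp
    linear_combination a ^ 2 * sin_sq_add_cos_sq θ

/-- A primitive of `θ ↦ sin² θ √(l² cos² θ - a²) / cos θ`. Splitting `sin² / cos = 1 / cos - cos`,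
it is found from `u = tan θ` on the first part and `u = sin θ` on the second. -/
noncomputable def sinSqSqrtDivCosPrimitive (a l θ : ℝ) : ℝ :=
  (l - (l ^ 2 - a ^ 2) / (2 * l)) * arcsin (l * sin θ / √(l ^ 2 - a ^ 2)) -
    a * arcsin (a * tan θ / √(l ^ 2 - a ^ 2)) - sin θ * √((l * cos θ) ^ 2 - a ^ 2) / 2

lemma hasDerivAt_sinSqSqrtDivCosPrimitive (hl : l ≠ 0) (hc : 0 < cos θ)
    (h : a ^ 2 < (l * cos θ) ^ 2) :
    HasDerivAt (sinSqSqrtDivCosPrimitive a l)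
      (sin θ ^ 2 * (√((l * cos θ) ^ 2 - a ^ 2) / cos θ)) θ := by
  have hs : 0 < (l * cos θ) ^ 2 - a ^ 2 := sub_pos.2 h
  have hs_sqrt : 0 < √((l * cos θ) ^ 2 - a ^ 2) := sqrt_pos.2 hs
  have hsq := sq_sqrt hs.le
  convert! (((hasDerivAt_arcsin_mul_sin_div h).const_mul _).fun_sub
    ((hasDerivAt_arcsin_mul_tan_div hc h).const_mul a)).fun_sub
    (((hasDerivAt_sin θ).fun_mul (hasDerivAt_sqrt_mul_cos_sq_sub_sq h)).div_const 2) using 1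
  generalize √((l * cos θ) ^ 2 - a ^ 2) = s at hs_sqrt hsq ⊢
  field_simp
  linear_combination (2 * sin θ ^ 2 + cos θ ^ 2) * hsq +
    ((l * cos θ) ^ 2 - 2 * a ^ 2) * sin_sq_add_cos_sq θ

lemma continuousOn_sinSqSqrtDivCosPrimitive (a l : ℝ) :
    ContinuousOn (sinSqSqrtDivCosPrimitive a l) {θ | cos θ ≠ 0} := by
  have htan := continuousOn_tan
  unfold sinSqSqrtDivCosPrimitive
  fun_prop

lemma sinSqSqrtDivCosPrimitive_zero (a l : ℝ) : sinSqSqrtDivCosPrimitive a l 0 = 0 := by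
  simp [sinSqSqrtDivCosPrimitive]

lemma sinSqSqrtDivCosPrimitive_arccos_div (ha : 0 < a) (hl : a < l) :
    sinSqSqrtDivCosPrimitive a l (arccos (a / l)) = π * (l - a) ^ 2 / (4 * l) := by
  have hl0 : 0 < l := ha.trans hl
  have hb : 0 < √(l ^ 2 - a ^ 2) := sqrt_pos.2 (by nlinarith)
  have hsin : l * (√(l ^ 2 - a ^ 2) / l) / √(l ^ 2 - a ^ 2) = 1 := by field_simp
  have htan : a * (√(l ^ 2 - a ^ 2) / l / (a / l)) / √(l ^ 2 - a ^ 2) = 1 := by field_simp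
  rw [sinSqSqrtDivCosPrimitive, tan_eq_sin_div_cos, cos_arccos_div ha hl.le, sin_arccos_div hl0,
    hsin, htan, mul_div_cancel₀ a hl0.ne', sub_self, sqrt_zero, arcsin_one]
  field_simp
  ring

lemma integral_sin_sq_mul_sqrt_div_cos (ha : 0 < a) (hl : a ≤ l) :
    ∫ θ in 0..arccos (a / l), sin θ ^ 2 * (√((l * cos θ) ^ 2 - a ^ 2) / cos θ) =
      π * (l - a) ^ 2 / (4 * l) := by
  obtain rfl | hlt := hl.eq_or_lt
  · simp [ha.ne']
  have hcont : ContinuousOn (sinSqSqrtDivCosPrimitive a l) (Icc 0 (arccos (a / l))) :=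
    (continuousOn_sinSqSqrtDivCosPrimitive a l).mono
      fun _ hθ ↦ (cos_pos_of_mem_Icc_arccos ha hl hθ).ne'
  have hderiv : ∀ θ ∈ Ioo 0 (arccos (a / l)), HasDerivAt (sinSqSqrtDivCosPrimitive a l)
      (sin θ ^ 2 * (√((l * cos θ) ^ 2 - a ^ 2) / cos θ)) θ := fun θ hθ ↦
    hasDerivAt_sinSqSqrtDivCosPrimitive (ha.trans hlt).ne'
      (cos_pos_of_mem_Icc_arccos ha hl (Ioo_subset_Icc_self hθ))
      (pow_lt_pow_left₀ (lt_mul_cos_of_mem_Ioo_arccos ha hl hθ) ha.le two_ne_zero)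
  rw [integral_eq_sub_of_hasDerivAt_of_le (arccos_nonneg _) hcont hderiv
      (ContinuousOn.intervalIntegrable_of_Icc (arccos_nonneg _)
        (ContinuousOn.mul (by fun_prop) (continuousOn_sqrt_div_cos ha hl))),
    sinSqSqrtDivCosPrimitive_arccos_div ha hlt, sinSqSqrtDivCosPrimitive_zero, sub_zero]

lemma integral_sin_mul_cos_mul_sqrt (ha : 0 < a) (hl : a ≤ l) :
    ∫ θ in 0..arccos (a / l), sin θ * cos θ * √((l * cos θ) ^ 2 - a ^ 2) =
      √(l ^ 2 - a ^ 2) ^ 3 / (3 * l ^ 2) := by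
  have hl0 : 0 < l := ha.trans_le hl
  have hderiv : ∀ θ ∈ Ioo 0 (arccos (a / l)),
      HasDerivAt (fun θ ↦ -(√((l * cos θ) ^ 2 - a ^ 2) ^ 3 / (3 * l ^ 2)))
        (sin θ * cos θ * √((l * cos θ) ^ 2 - a ^ 2)) θ := fun θ hθ ↦ by
    have h : a ^ 2 < (l * cos θ) ^ 2 :=
      pow_lt_pow_left₀ (lt_mul_cos_of_mem_Ioo_arccos ha hl hθ) ha.le two_ne_zero
    convert! (((hasDerivAt_sqrt_mul_cos_sq_sub_sq h).fun_pow 3).div_const (3 * l ^ 2)).fun_neg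
      using 1
    push_cast
    field_simp
  rw [integral_eq_sub_of_hasDerivAt_of_le (arccos_nonneg _) (by fun_prop) hderiv
      (Continuous.intervalIntegrable (by fun_prop) _ _),
    cos_arccos_div ha hl, mul_div_cancel₀ a hl0.ne', cos_zero, sub_self, sqrt_zero, mul_one]
  ring

lemma integral_sin_mul_cos_pow_three (p q : ℝ) :
    ∫ θ in p..q, sin θ * cos θ ^ 3 = (cos p ^ 4 - cos q ^ 4) / 4 := by
  simpa [show (3 + 1 : ℝ) = 4 by norm_num] using
    integral_sin_pow_odd_mul_cos_pow (a := p) (b := q) 0 3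

lemma hasDerivAt_clippedAzimuthIntegral_mul_cos (ha : 0 < a) (h : a < l * cos θ) :
    HasDerivAt (fun θ ↦ clippedAzimuthIntegral a (l * cos θ))
      (sin θ * (l ^ 2 * cos θ - 2 * a * (√((l * cos θ) ^ 2 - a ^ 2) / cos θ))) θ := by
  obtain ⟨hl, hc⟩ := mul_ne_zero_iff.1 (ha.trans h).ne'
  convert! (hasDerivAt_clippedAzimuthIntegral ha h).comp θ ((hasDerivAt_cos θ).const_mul l) using 1
  field_simp
  ring

lemma integral_deriv_clippedAzimuthIntegral_mul (ha : 0 < a) (hl : a ≤ l) :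
    ∫ θ in 0..arccos (a / l),
        sin θ * (l ^ 2 * cos θ - 2 * a * (√((l * cos θ) ^ 2 - a ^ 2) / cos θ)) *
          (a * sin θ + l / 2 * cos θ ^ 2) =
      (l ^ 4 - a ^ 4) / (8 * l) - π * a ^ 2 * (l - a) ^ 2 / (2 * l) := by
  have hl0 : 0 < l := ha.trans_le hl
  have hexpand : ∀ θ ∈ uIcc 0 (arccos (a / l)),
      sin θ * (l ^ 2 * cos θ - 2 * a * (√((l * cos θ) ^ 2 - a ^ 2) / cos θ)) *
        (a * sin θ + l / 2 * cos θ ^ 2) =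
      a * l ^ 2 * (sin θ ^ 2 * cos θ) + l ^ 3 / 2 * (sin θ * cos θ ^ 3) -
        2 * a ^ 2 * (sin θ ^ 2 * (√((l * cos θ) ^ 2 - a ^ 2) / cos θ)) -
        a * l * (sin θ * cos θ * √((l * cos θ) ^ 2 - a ^ 2)) := fun θ hθ ↦ by
    rw [uIcc_of_le (arccos_nonneg _)] at hθ
    have hc := cos_pos_of_mem_Icc_arccos ha hl hθ
    field_simp
    ring
  have hint : IntervalIntegrable
      (fun θ ↦ 2 * a ^ 2 * (sin θ ^ 2 * (√((l * cos θ) ^ 2 - a ^ 2) / cos θ)))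
      volume 0 (arccos (a / l)) :=
    ContinuousOn.intervalIntegrable_of_Icc (arccos_nonneg _) (continuousOn_const.mul
      (ContinuousOn.mul (by fun_prop) (continuousOn_sqrt_div_cos ha hl)))
  have hint_poly : IntervalIntegrable
      (fun θ ↦ a * l ^ 2 * (sin θ ^ 2 * cos θ) + l ^ 3 / 2 * (sin θ * cos θ ^ 3))
      volume 0 (arccos (a / l)) := Continuous.intervalIntegrable (by fun_prop) _ _
  rw [integral_congr hexpand, integral_sub (hint_poly.sub hint)
      (Continuous.intervalIntegrable (by fun_prop) _ _), integral_sub hint_poly hint,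
    integral_add (Continuous.intervalIntegrable (by fun_prop) _ _)
      (Continuous.intervalIntegrable (by fun_prop) _ _),
    intervalIntegral.integral_const_mul, intervalIntegral.integral_const_mul,
    intervalIntegral.integral_const_mul, intervalIntegral.integral_const_mul,
    integral_sin_sq_mul_cos, integral_sin_mul_cos_pow_three,
    integral_sin_sq_mul_sqrt_div_cos ha hl, integral_sin_mul_cos_mul_sqrt ha hl,
    cos_arccos_div ha hl, sin_arccos_div hl0, sin_zero, cos_zero]
  field_simp
  ring

lemma integral_cos_mul_sub_sin_mul_clippedAzimuthIntegral (ha : 0 < a) (hl : a ≤ l) :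
    ∫ θ in 0..arccos (a / l), cos θ * (a - l * sin θ) * clippedAzimuthIntegral a (l * cos θ) =
      (2 * √(l ^ 2 - a ^ 2) + a) * (π - 3) * a ^ 3 / (4 * l) - l / 2 * clippedAzimuthIntegral a l -
        ((l ^ 4 - a ^ 4) / (8 * l) - π * a ^ 2 * (l - a) ^ 2 / (2 * l)) := by
  have hl0 : 0 < l := ha.trans_le hl
  have hα := arccos_nonneg (a / l)
  -- With `l / 2 * cos θ ^ 2` in place of `-(l / 2 * sin θ ^ 2)`, this part of the primitive cancels
  -- the `1 / cos θ` in the derivative of the azimuthal integral.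
  have hprim (θ : ℝ) : HasDerivAt (fun θ ↦ a * sin θ + l / 2 * cos θ ^ 2)
      (cos θ * (a - l * sin θ)) θ := by
    convert! ((hasDerivAt_sin θ).const_mul a).fun_add
      (((hasDerivAt_cos θ).fun_pow 2).const_mul (l / 2)) using 1
    push_cast
    ring
  have hcont : ContinuousOn (fun θ ↦ clippedAzimuthIntegral a (l * cos θ))
      (uIcc 0 (arccos (a / l))) := by
    rw [uIcc_of_le hα]
    exact (continuousOn_clippedAzimuthIntegral ha).comp (by fun_prop)
      fun θ hθ ↦ le_mul_cos_of_mem_Icc_arccos ha hl hθ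
  have hint : IntervalIntegrable
      (fun θ ↦ sin θ * (l ^ 2 * cos θ - 2 * a * (√((l * cos θ) ^ 2 - a ^ 2) / cos θ)))
      volume 0 (arccos (a / l)) := by
    have := continuousOn_sqrt_div_cos ha hl
    exact ContinuousOn.intervalIntegrable_of_Icc hα (by fun_prop)
  have hderiv : ∀ θ ∈ Ioo (min 0 (arccos (a / l))) (max 0 (arccos (a / l))),
      HasDerivAt (fun θ ↦ clippedAzimuthIntegral a (l * cos θ))
        (sin θ * (l ^ 2 * cos θ - 2 * a * (√((l * cos θ) ^ 2 - a ^ 2) / cos θ))) θ := by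
    rw [min_eq_left hα, max_eq_right hα]
    exact fun θ hθ ↦ hasDerivAt_clippedAzimuthIntegral_mul_cos ha
      (lt_mul_cos_of_mem_Ioo_arccos ha hl hθ)
  simp only [mul_comm _ (clippedAzimuthIntegral _ _)]
  rw [integral_mul_deriv_eq_deriv_mul_of_hasDerivAt hcont (by fun_prop) hderiv
      (fun θ _ ↦ hprim θ) hint (Continuous.intervalIntegrable (by fun_prop) _ _),
    integral_deriv_clippedAzimuthIntegral_mul ha hl, cos_arccos_div ha hl, sin_arccos_div hl0,
    mul_div_cancel₀ a hl0.ne', clippedAzimuthIntegral_self ha, sin_zero, cos_zero, mul_one]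
  field_simp
  ring

lemma integral_cos_mul_sub_sin_mul_integral_zero_pi_div_two (ha : 0 < a) (hl : a ≤ l) :
    ∫ θ in arccos (a / l)..arcsin (a / l), cos θ * (a - l * sin θ) *
        ∫ φ in 0..π / 2, (a - l * cos θ * cos φ) * (a - l * cos θ * sin φ) =
      π * a ^ 3 * (a - √(l ^ 2 - a ^ 2)) / (2 * l) - a ^ 2 * l * (π / 2 - 2 * arccos (a / l)) +
        a * (a * l ^ 2 + a ^ 3 - (2 * l ^ 2 - a ^ 2) * √(l ^ 2 - a ^ 2)) / (2 * l) +
        π * a ^ 2 * (l ^ 2 - 2 * a ^ 2) / (4 * l) + l * (l ^ 2 - 2 * a ^ 2) / 8 := by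
  have hl0 : 0 < l := ha.trans_le hl
  have hsq : √(l ^ 2 - a ^ 2) ^ 2 = l ^ 2 - a ^ 2 := sq_sqrt (by nlinarith)
  have hquad (θ : ℝ) :
      ∫ φ in 0..π / 2, (a - l * cos θ * cos φ) * (a - l * cos θ * sin φ) =
        π / 2 * a ^ 2 + -(2 * a * l) * cos θ + l ^ 2 / 2 * cos θ ^ 2 := by
    rw [integral_zero_pi_div_two_sub_mul_cos_mul_sub_mul_sin]
    ring
  simp only [hquad, integral_cos_mul_sub_sin_mul_quadratic_cos,
    arcsin_eq_pi_div_two_sub_arccos, sin_pi_div_two_sub, cos_pi_div_two_sub, cos_arccos_div ha hl,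
    sin_arccos_div hl0]
  generalize √(l ^ 2 - a ^ 2) = s at hsq ⊢
  field_simp
  linear_combination (96 * π * a ^ 2 - 192 * a * s + 48 * (s ^ 2 + l ^ 2 - a ^ 2)) * hsq

theorem angular_integral_second_range_general (a : ℝ) (ha : 0 < a) (l : ℝ) (hl : a ≤ l) :
    l ^ 2 *
      ((∫ θ in arccos (a / l)..arcsin (a / l),
          cos θ * (a - l * sin θ) *
            ∫ φ in 0..π / 2,
              (a - l * cos θ * cos φ) * (a - l * cos θ * sin φ)) +
        ∫ θ in 0..arccos (a / l),
          cos θ * (a - l * sin θ) *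
            ∫ φ in arccos (a / (l * cos θ))..arcsin (a / (l * cos θ)),
              (a - l * cos θ * cos φ) * (a - l * cos θ * sin φ)) =
      l / 8 *
        (2 * l ^ 4 + 6 * a ^ 2 * l ^ 2 - a ^ 4 - 2 * π * a ^ 3 * (4 * l - 3 * a) -
          8 * a * (2 * l ^ 2 + a ^ 2) * √(l ^ 2 - a ^ 2) +
          24 * a ^ 2 * l ^ 2 * arccos (a / l)) := by
  change l ^ 2 * (_ + ∫ θ in 0..arccos (a / l),
    cos θ * (a - l * sin θ) * clippedAzimuthIntegral a (l * cos θ)) = _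
  rw [integral_cos_mul_sub_sin_mul_integral_zero_pi_div_two ha hl,
    integral_cos_mul_sub_sin_mul_clippedAzimuthIntegral ha hl, clippedAzimuthIntegral_eq ha hl]
  field_simp
  ring

theorem angular_integral_second_range (a : ℝ) (ha : 0 < a) (l : ℝ)
    (h1 : a < l) (h2 : l < Real.sqrt 2 * a) :
    l ^ 2 *
      ((∫ θ in Real.arccos (a / l)..Real.arcsin (a / l),
          Real.cos θ * (a - l * Real.sin θ) *
            ∫ φ in (0:ℝ)..(π / 2),
              (a - l * Real.cos θ * Real.cos φ) * (a - l * Real.cos θ * Real.sin φ)) +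
        ∫ θ in (0:ℝ)..Real.arccos (a / l),
          Real.cos θ * (a - l * Real.sin θ) *
            ∫ φ in Real.arccos (a / (l * Real.cos θ))..Real.arcsin (a / (l * Real.cos θ)),
              (a - l * Real.cos θ * Real.cos φ) * (a - l * Real.cos θ * Real.sin φ)) =
      l / 8 *
        (2 * l ^ 4 + 6 * a ^ 2 * l ^ 2 - a ^ 4 - 2 * π * a ^ 3 * (4 * l - 3 * a)
          - 8 * a * (2 * l ^ 2 + a ^ 2) * Real.sqrt (l ^ 2 - a ^ 2)
          + 24 * a ^ 2 * l ^ 2 * Real.arccos (a / l)) :=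
  angular_integral_second_range_general a ha l h1.le
end

section
/- For every l with √2·a < l < √3·a, writing φ₁(θ) = arccos(a/(l·cosθ)) and φ₂(θ) = arcsin(a/(l·cosθ)), the iterated integral l²·∫_{arccos(√2·a/l)}^{arcsin(a/l)} cosθ·(a − l·sinθ)·( ∫_{φ₁(θ)}^{φ₂(θ)} (a − l·cosθ·cosφ)(a − l·cosθ·sinφ) dφ ) dθ equals (l/8)·[8a(l² + a²)·√(l² − 2a²) − (l² + a²)(l² + 5a²) + 2πa²(3l² − 4al + 3a²) + 24a³l·arccos(a²/(l² − a²)) − 24a²(l² + a²)·arccos(a/√(l² − a²))]. -/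
open MeasureTheory Real Set intervalIntegral

/-!
The inner integral is elementary. In the outer one the substitution `u = l sin θ` turns `l cos θ`
into `√(l² - u²)` and the limits into `d = √(l² - 2a²)` and `a`, leaving polynomial terms and the
integrals of `(a - u) √(l² - a² - u²)` and `(a - u) arccos (a / √(l² - u²))`. The first is a
circular-sector integral. The second is done by parts, which produces an `arctan`. At the limits
everything collapses because `l² = 2a² + d²`: reflecting `u ↦ √(l² - a² - u²)` exchanges `a` and
`d`, and the two values of the `arctan` are the complement and the half of
`arccos (a² / (a² + d²))`.
-/

lemma sqrt_one_sub_div_sq {r : ℝ} (hr : 0 < r) (x : ℝ) :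
    √(1 - (x / r) ^ 2) = √(r ^ 2 - x ^ 2) / r := by
  rw [div_pow, one_sub_div (by positivity), sqrt_div' _ (by positivity), sqrt_sq hr.le]

lemma mul_sin_arccos_div {r : ℝ} (hr : 0 < r) (x : ℝ) :
    r * sin (arccos (x / r)) = √(r ^ 2 - x ^ 2) := by
  rw [sin_arccos, sqrt_one_sub_div_sq hr, mul_div_cancel₀ _ hr.ne']

/-- The inner integral of `angular_integral_third_range`, at horizontal radius `r = l * cos θ`. -/
noncomputable def azimuthalIntegral (a r : ℝ) : ℝ :=
  ∫ φ in arccos (a / r)..arcsin (a / r), (a - r * cos φ) * (a - r * sin φ)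

lemma azimuthalIntegral_eq {a r : ℝ} (hr : 0 < r) (har : |a| ≤ r) :
    azimuthalIntegral a r =
      a ^ 2 * (π / 2 - 2 * arccos (a / r)) - a ^ 2 - r ^ 2 / 2 + 2 * a * √(r ^ 2 - a ^ 2) := by
  have hderiv (φ : ℝ) : HasDerivAt
      (fun φ ↦ a ^ 2 * φ - a * r * sin φ + a * r * cos φ + r ^ 2 / 2 * sin φ ^ 2)
      ((a - r * cos φ) * (a - r * sin φ)) φ := by
    refine (((((hasDerivAt_id φ).const_mul (a ^ 2)).sub
      ((hasDerivAt_sin φ).const_mul (a * r))).add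
      ((hasDerivAt_cos φ).const_mul (a * r))).add
      (((hasDerivAt_sin φ).pow 2).const_mul (r ^ 2 / 2))).congr_deriv ?_
    ring
  have hlower : -1 ≤ a / r := by
    rw [le_div_iff₀ hr]
    linarith [neg_le_of_abs_le har]
  have hupper : a / r ≤ 1 := (div_le_one hr).2 (le_of_abs_le har)
  have hsq : √(r ^ 2 - a ^ 2) ^ 2 = r ^ 2 - a ^ 2 :=
    sq_sqrt (sub_nonneg.2 (sq_le_sq' (neg_le_of_abs_le har) (le_of_abs_le har)))
  rw [azimuthalIntegral, integral_eq_sub_of_hasDerivAt (fun φ _ ↦ hderiv φ)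
      (Continuous.intervalIntegrable (by fun_prop) _ _),
    sin_arcsin hlower hupper, cos_arccos hlower hupper, sin_arccos, cos_arcsin,
    sqrt_one_sub_div_sq hr, arcsin_eq_pi_div_two_sub_arccos]
  field_simp
  linear_combination -hsq

lemma integral_cos_mul_comp_mul_sin_mul_cos {l α β : ℝ} (hl : 0 ≤ l)
    (hα : α ∈ Icc (-(π / 2)) (π / 2)) (hβ : β ∈ Icc (-(π / 2)) (π / 2)) (F : ℝ → ℝ → ℝ) :
    l * ∫ θ in α..β, cos θ * F (l * sin θ) (l * cos θ) =
      ∫ u in l * sin α..l * sin β, F u √(l ^ 2 - u ^ 2) := by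
  have hcos {θ : ℝ} (hθ : θ ∈ uIcc α β) : 0 ≤ l * cos θ :=
    mul_nonneg hl (cos_nonneg_of_mem_Icc (uIcc_subset_Icc hα hβ hθ))
  have hsqrt (θ : ℝ) (hθ : θ ∈ uIcc α β) : √(l ^ 2 - (l * sin θ) ^ 2) = l * cos θ := by
    rw [← sqrt_sq (hcos hθ)]
    congr 1
    linear_combination (-l ^ 2) * sin_sq_add_cos_sq θ
  rw [← integral_deriv_smul_comp_of_deriv_nonneg (f := fun θ ↦ l * sin θ)
    (f' := fun θ ↦ l * cos θ) (by fun_prop) (fun θ _ ↦ (hasDerivAt_sin θ).const_mul l)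
    (fun θ hθ ↦ hcos (Ioo_subset_Icc_self hθ)), ← intervalIntegral.integral_const_mul]
  refine integral_congr fun θ hθ ↦ ?_
  simp only [Function.comp_apply, smul_eq_mul, hsqrt θ hθ, mul_assoc]

section Derivatives

variable {a c l u : ℝ}

lemma hasDerivAt_sqrt_sub_sq (hu : u ^ 2 < c) :
    HasDerivAt (fun u ↦ √(c - u ^ 2)) (-u / √(c - u ^ 2)) u := by
  refine (((hasDerivAt_pow 2 u).const_sub c).sqrt (sub_pos.2 hu).ne').congr_deriv ?_
  field_simp
  norm_num

lemma hasDerivAt_arcsin_div_sqrt (hu : u ^ 2 < c) :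
    HasDerivAt (fun u ↦ arcsin (u / √c)) (1 / √(c - u ^ 2)) u := by
  have hc : 0 < c := (sq_nonneg u).trans_lt hu
  have hlt : (u / √c) ^ 2 < 1 := by rwa [div_pow, sq_sqrt hc.le, div_lt_one hc]
  obtain ⟨hlower, hupper⟩ := abs_lt.1 ((sq_lt_one_iff_abs_lt_one _).1 hlt)
  refine ((hasDerivAt_arcsin hlower.ne' hupper.ne).comp u
    ((hasDerivAt_id u).div_const √c)).congr_deriv ?_
  have hsqrt : 0 < √c := sqrt_pos.2 hc
  simp only [sqrt_one_sub_div_sq hsqrt, sq_sqrt hc.le]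
  field_simp

lemma hasDerivAt_arccos_div_sqrt_sub_sq (hu : u ^ 2 < c - a ^ 2) :
    HasDerivAt (fun u ↦ arccos (a / √(c - u ^ 2)))
      (-(a * u) / ((c - u ^ 2) * √(c - a ^ 2 - u ^ 2))) u := by
  have hpos : 0 < c - u ^ 2 := by linarith [sq_nonneg a]
  have hsq : √(c - u ^ 2) ^ 2 = c - u ^ 2 := sq_sqrt hpos.le
  have hr : 0 < √(c - u ^ 2) := sqrt_pos.2 hpos
  have hlt : (a / √(c - u ^ 2)) ^ 2 < 1 := by
    rw [div_pow, hsq, div_lt_one hpos]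
    linarith
  obtain ⟨hlower, hupper⟩ := abs_lt.1 ((sq_lt_one_iff_abs_lt_one _).1 hlt)
  refine ((hasDerivAt_arccos hlower.ne' hupper.ne).comp u ((hasDerivAt_const u a).div
    (hasDerivAt_sqrt_sub_sq (by linarith)) hr.ne')).congr_deriv ?_
  rw [sqrt_one_sub_div_sq hr, hsq, sub_right_comm c]
  field_simp
  rw [hsq]
  ring

lemma hasDerivAt_arctan_div_sqrt_sub_sq (hu : u ^ 2 < l ^ 2 - a ^ 2) :
    HasDerivAt (fun u ↦ arctan (a * u / (l * √(l ^ 2 - a ^ 2 - u ^ 2))))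
      (a * l / ((l ^ 2 - u ^ 2) * √(l ^ 2 - a ^ 2 - u ^ 2))) u := by
  have hw : 0 < √(l ^ 2 - a ^ 2 - u ^ 2) := sqrt_pos.2 (sub_pos.2 hu)
  have hw_sq : √(l ^ 2 - a ^ 2 - u ^ 2) ^ 2 = l ^ 2 - a ^ 2 - u ^ 2 := sq_sqrt (sub_pos.2 hu).le
  have hl : l ≠ 0 := by
    rintro rfl
    nlinarith
  have hla : l ^ 2 - a ^ 2 ≠ 0 := by nlinarith
  have hlu : l ^ 2 - u ^ 2 ≠ 0 := by nlinarith
  refine (((hasDerivAt_id u).const_mul a).div ((hasDerivAt_sqrt_sub_sq hu).const_mul l)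
    (by positivity)).arctan.congr_deriv ?_
  simp only [id, Pi.div_apply]
  set w := √(l ^ 2 - a ^ 2 - u ^ 2)
  have hsec : 1 + (a * u / (l * w)) ^ 2 =
      (l ^ 2 - a ^ 2) * (l ^ 2 - u ^ 2) / (l ^ 2 * w ^ 2) := by
    field_simp
    linear_combination l ^ 2 * hw_sq
  rw [hsec]
  field_simp
  linear_combination a * hw_sq

lemma hasDerivAt_mul_sqrt_add_mul_arcsin (hu : u ^ 2 < c) :
    HasDerivAt (fun u ↦ u * √(c - u ^ 2) + c * arcsin (u / √c)) (2 * √(c - u ^ 2)) u := by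
  have hw : 0 < √(c - u ^ 2) := sqrt_pos.2 (sub_pos.2 hu)
  have hw_sq : √(c - u ^ 2) ^ 2 = c - u ^ 2 := sq_sqrt (sub_pos.2 hu).le
  refine (((hasDerivAt_id u).mul (hasDerivAt_sqrt_sub_sq hu)).add
    ((hasDerivAt_arcsin_div_sqrt hu).const_mul c)).congr_deriv ?_
  simp only [id]
  field_simp
  linear_combination -hw_sq

lemma hasDerivAt_sqrt_sub_sq_pow_three (hu : u ^ 2 < c) :
    HasDerivAt (fun u ↦ √(c - u ^ 2) ^ 3) (-3 * (u * √(c - u ^ 2))) u := by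
  have hw : 0 < √(c - u ^ 2) := sqrt_pos.2 (sub_pos.2 hu)
  refine ((hasDerivAt_sqrt_sub_sq hu).pow 3).congr_deriv ?_
  field_simp
  ring

-- Integration by parts, with the antiderivative of `a - u` normalised so that its term
-- `(l ^ 2 - u ^ 2) / 2` cancels the denominator in the derivative of the `arccos`.
lemma hasDerivAt_mul_arccos_add_mul_arctan (hu : u ^ 2 < l ^ 2 - a ^ 2) :
    HasDerivAt (fun u ↦ (a * u + (l ^ 2 - u ^ 2) / 2) * arccos (a / √(l ^ 2 - u ^ 2))
        + a * l * arctan (a * u / (l * √(l ^ 2 - a ^ 2 - u ^ 2)))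
        - a ^ 2 * arcsin (u / √(l ^ 2 - a ^ 2)) - a / 2 * √(l ^ 2 - a ^ 2 - u ^ 2))
      ((a - u) * arccos (a / √(l ^ 2 - u ^ 2))) u := by
  have hw : 0 < √(l ^ 2 - a ^ 2 - u ^ 2) := sqrt_pos.2 (sub_pos.2 hu)
  have hlu : l ^ 2 - u ^ 2 ≠ 0 := by nlinarith
  have hpoly : HasDerivAt (fun u ↦ a * u + (l ^ 2 - u ^ 2) / 2) (a - u) u := by
    refine (((hasDerivAt_id u).const_mul a).add
      (((hasDerivAt_pow 2 u).const_sub (l ^ 2)).div_const 2)).congr_deriv ?_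
    ring
  refine ((((hpoly.mul (hasDerivAt_arccos_div_sqrt_sub_sq hu)).add
    ((hasDerivAt_arctan_div_sqrt_sub_sq hu).const_mul (a * l))).sub
    ((hasDerivAt_arcsin_div_sqrt hu).const_mul (a ^ 2))).sub
    ((hasDerivAt_sqrt_sub_sq hu).const_mul (a / 2))).congr_deriv ?_
  field_simp
  ring

end Derivatives

lemma two_mul_arctan_eq_arccos {x : ℝ} (hx : 0 ≤ x) :
    2 * arctan x = arccos ((1 - x ^ 2) / (1 + x ^ 2)) := by
  have hcos : cos (2 * arctan x) = (1 - x ^ 2) / (1 + x ^ 2) := by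
    rw [cos_two_mul, cos_sq_arctan]
    field_simp
    ring
  rw [← hcos, arccos_cos (by linarith [arctan_nonneg.2 hx]) (by linarith [arctan_lt_pi_div_two x])]

section Endpoints

variable {a d l u : ℝ}

lemma sq_lt_add_sq_of_mem_uIcc (ha : 0 < a) (hd : 0 < d) (hu : u ∈ uIcc d a) :
    u ^ 2 < a ^ 2 + d ^ 2 := by
  rcases mem_uIcc.1 hu with ⟨hdu, hua⟩ | ⟨hau, hud⟩ <;> nlinarith

lemma arcsin_div_sqrt_add_sq (ha : 0 < a) (hd : 0 ≤ d) :
    arcsin (d / √(a ^ 2 + d ^ 2)) = arccos (a / √(a ^ 2 + d ^ 2)) := by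
  have hb : 0 < √(a ^ 2 + d ^ 2) := by positivity
  rw [arccos_eq_arcsin (by positivity), sqrt_one_sub_div_sq hb, sq_sqrt (by positivity),
    add_sub_cancel_left, sqrt_sq hd]

lemma arctan_sq_div_mul (ha : 0 < a) (hd : 0 < d) (hl : 0 < l) (hld : l ^ 2 = 2 * a ^ 2 + d ^ 2) :
    arctan (a * a / (l * d)) = π / 2 - arccos (a ^ 2 / (a ^ 2 + d ^ 2)) := by
  have hpos : 0 < a ^ 2 + d ^ 2 := by positivity
  have hlt : a ^ 2 / (a ^ 2 + d ^ 2) < 1 := (div_lt_one hpos).2 (by nlinarith)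
  have hleg : (a ^ 2 + d ^ 2) ^ 2 - (a ^ 2) ^ 2 = (l * d) ^ 2 := by
    rw [mul_pow, hld]
    ring
  rw [← arcsin_eq_pi_div_two_sub_arccos,
    arcsin_eq_arctan ⟨neg_one_lt_zero.trans (by positivity), hlt⟩, sqrt_one_sub_div_sq hpos, hleg,
    sqrt_sq (by positivity)]
  congr 1
  field_simp

lemma arctan_div_eq_half_arccos (hd : 0 < d) (hl : 0 < l) (hld : l ^ 2 = 2 * a ^ 2 + d ^ 2) :
    arctan (d / l) = arccos (a ^ 2 / (a ^ 2 + d ^ 2)) / 2 := by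
  have hratio : (1 - (d / l) ^ 2) / (1 + (d / l) ^ 2) = a ^ 2 / (a ^ 2 + d ^ 2) := by
    rw [div_pow, hld]
    field_simp
    ring
  rw [← hratio, ← two_mul_arctan_eq_arccos (by positivity)]
  ring

lemma arccos_div_sqrt_two_mul (ha : a ≠ 0) : arccos (a / (√2 * a)) = π / 4 := by
  have hratio : a / (√2 * a) = cos (π / 4) := by
    rw [cos_pi_div_four]
    field_simp
    norm_num
  rw [hratio, arccos_cos (by positivity) (by linarith [pi_pos])]

end Endpoints

section OuterIntegrals

variable {a d l : ℝ}

lemma integral_sub_mul_sqrt (ha : 0 < a) (hd : 0 < d) :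
    ∫ u in d..a, (a - u) * √(a ^ 2 + d ^ 2 - u ^ 2) =
      a * (a ^ 2 + d ^ 2) / 2 * (π / 2 - 2 * arccos (a / √(a ^ 2 + d ^ 2)))
        + (d ^ 3 - a ^ 3) / 3 := by
  have hderiv (u : ℝ) (hu : u ∈ uIcc d a) : HasDerivAt
      (fun u ↦ a / 2 * (u * √(a ^ 2 + d ^ 2 - u ^ 2)
          + (a ^ 2 + d ^ 2) * arcsin (u / √(a ^ 2 + d ^ 2)))
        + √(a ^ 2 + d ^ 2 - u ^ 2) ^ 3 / 3)
      ((a - u) * √(a ^ 2 + d ^ 2 - u ^ 2)) u := by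
    have hlt := sq_lt_add_sq_of_mem_uIcc ha hd hu
    refine (((hasDerivAt_mul_sqrt_add_mul_arcsin hlt).const_mul (a / 2)).add
      ((hasDerivAt_sqrt_sub_sq_pow_three hlt).div_const 3)).congr_deriv ?_
    ring
  rw [integral_eq_sub_of_hasDerivAt hderiv (Continuous.intervalIntegrable (by fun_prop) _ _),
    add_sub_cancel_left, add_sub_cancel_right, sqrt_sq hd.le, sqrt_sq ha.le,
    arcsin_div_sqrt_add_sq ha hd.le, arcsin_eq_pi_div_two_sub_arccos]
  ring

lemma intervalIntegrable_sub_mul_arccos (ha : 0 < a) (hd : 0 < d)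
    (hld : l ^ 2 = 2 * a ^ 2 + d ^ 2) :
    IntervalIntegrable (fun u ↦ (a - u) * arccos (a / √(l ^ 2 - u ^ 2))) volume d a := by
  have hquot : ContinuousOn (fun u ↦ a / √(l ^ 2 - u ^ 2)) (uIcc d a) :=
    ContinuousOn.div (by fun_prop) (by fun_prop) fun u hu ↦
      (sqrt_pos.2 (by nlinarith [sq_lt_add_sq_of_mem_uIcc ha hd hu])).ne'
  exact (ContinuousOn.mul (by fun_prop)
    (continuous_arccos.comp_continuousOn hquot)).intervalIntegrable

lemma integral_sub_mul_arccos (ha : 0 < a) (hd : 0 < d) (hl : 0 < l)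
    (hld : l ^ 2 = 2 * a ^ 2 + d ^ 2) :
    ∫ u in d..a, (a - u) * arccos (a / √(l ^ 2 - u ^ 2)) =
      ((l ^ 2 + a ^ 2) / 2 + 2 * a ^ 2) * arccos (a / √(a ^ 2 + d ^ 2))
        + a * l * (π / 2 - 3 / 2 * arccos (a ^ 2 / (a ^ 2 + d ^ 2)))
        - a ^ 2 * π / 2 - (a * d + a ^ 2) * π / 4 - a * d / 2 + a ^ 2 / 2 := by
  have hla : l ^ 2 - a ^ 2 = a ^ 2 + d ^ 2 := by linear_combination hld
  have hld' : l ^ 2 - d ^ 2 = (√2 * a) ^ 2 := by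
    rw [mul_pow, sq_sqrt zero_le_two]
    linear_combination hld
  have had : a * d / (l * a) = d / l := by field_simp
  rw [integral_eq_sub_of_hasDerivAt (fun u hu ↦ hasDerivAt_mul_arccos_add_mul_arctan
      (hla ▸ sq_lt_add_sq_of_mem_uIcc ha hd hu))
      (intervalIntegrable_sub_mul_arccos ha hd hld),
    hld', hla, add_sub_cancel_left, add_sub_cancel_right, sqrt_sq ha.le, sqrt_sq hd.le,
    sqrt_sq (by positivity), had, arctan_sq_div_mul ha hd hl hld,
    arctan_div_eq_half_arccos hd hl hld, arccos_div_sqrt_two_mul ha.ne',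
    arcsin_div_sqrt_add_sq ha hd.le, arcsin_eq_pi_div_two_sub_arccos, mul_pow, sq_sqrt zero_le_two]
  linear_combination -(arccos (a / √(a ^ 2 + d ^ 2)) / 2) * hla

lemma integral_sub_mul_add_sq_div_two (a d p : ℝ) :
    ∫ u in d..a, (a - u) * (p + u ^ 2 / 2) =
      (a - d) ^ 2 * (p / 2 + (a ^ 2 + 2 * a * d + 3 * d ^ 2) / 24) := by
  have hderiv (u : ℝ) : HasDerivAt
      (fun u ↦ p * (a * u - u ^ 2 / 2) + a * u ^ 3 / 6 - u ^ 4 / 8)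
      ((a - u) * (p + u ^ 2 / 2)) u := by
    refine (((((hasDerivAt_id u).const_mul a).sub ((hasDerivAt_pow 2 u).div_const 2)).const_mul
      p |>.add (((hasDerivAt_pow 3 u).const_mul a).div_const 6)).sub
      ((hasDerivAt_pow 4 u).div_const 8)).congr_deriv ?_
    ring
  rw [integral_eq_sub_of_hasDerivAt (fun u _ ↦ hderiv u)
    (Continuous.intervalIntegrable (by fun_prop) _ _)]
  ring

lemma integral_sub_mul_azimuthalIntegral (ha : 0 < a) (hd : 0 < d) (hl : 0 < l)
    (hld : l ^ 2 = 2 * a ^ 2 + d ^ 2) :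
    ∫ u in d..a, (a - u) * azimuthalIntegral a √(l ^ 2 - u ^ 2) =
      1 / 8 * (8 * a * (l ^ 2 + a ^ 2) * d - (l ^ 2 + a ^ 2) * (l ^ 2 + 5 * a ^ 2)
        + 2 * π * a ^ 2 * (3 * l ^ 2 - 4 * a * l + 3 * a ^ 2)
        + 24 * a ^ 3 * l * arccos (a ^ 2 / (a ^ 2 + d ^ 2))
        - 24 * a ^ 2 * (l ^ 2 + a ^ 2) * arccos (a / √(a ^ 2 + d ^ 2))) := by
  have hinner : EqOn
      (fun u ↦ (a - u) * azimuthalIntegral a √(l ^ 2 - u ^ 2))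
      (fun u ↦ (a - u) * (a ^ 2 * (π / 2 - 1) - l ^ 2 / 2 + u ^ 2 / 2)
        + 2 * a * ((a - u) * √(a ^ 2 + d ^ 2 - u ^ 2))
        - 2 * a ^ 2 * ((a - u) * arccos (a / √(l ^ 2 - u ^ 2)))) (uIcc d a) := by
    intro u hu
    have hlt : a ^ 2 < l ^ 2 - u ^ 2 := by linarith [sq_lt_add_sq_of_mem_uIcc ha hd hu]
    have hpos : 0 < l ^ 2 - u ^ 2 := (sq_nonneg a).trans_lt hlt
    have hrad : l ^ 2 - u ^ 2 - a ^ 2 = a ^ 2 + d ^ 2 - u ^ 2 := by linear_combination hld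
    simp only [azimuthalIntegral_eq (sqrt_pos.2 hpos) (abs_le_sqrt hlt.le),
      sq_sqrt hpos.le, hrad]
    ring
  rw [integral_congr hinner, intervalIntegral.integral_sub, intervalIntegral.integral_add,
    intervalIntegral.integral_const_mul, intervalIntegral.integral_const_mul,
    integral_sub_mul_add_sq_div_two, integral_sub_mul_sqrt ha hd,
    integral_sub_mul_arccos ha hd hl hld]
  · linear_combination (2 * a ^ 2 * arccos (a / √(a ^ 2 + d ^ 2)) - 3 / 4 * π * a ^ 2 - a * d / 2
      + (l ^ 2 + 6 * a ^ 2 - d ^ 2) / 8) * hld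
  · exact Continuous.intervalIntegrable (by fun_prop) _ _
  · exact Continuous.intervalIntegrable (by fun_prop) _ _
  · exact Continuous.intervalIntegrable (by fun_prop) _ _
  · exact (intervalIntegrable_sub_mul_arccos ha hd hld).const_mul _

end OuterIntegrals

-- For `l > √3 * a` the lower limit of the outer integral exceeds the upper one.
theorem angular_integral_third_range_general (a : ℝ) (ha : 0 < a) (l : ℝ) (h : √2 * a < l) :
    l ^ 2 *
      (∫ θ in arccos (√2 * a / l)..arcsin (a / l),
        cos θ * (a - l * sin θ) *
          ∫ φ in arccos (a / (l * cos θ))..arcsin (a / (l * cos θ)),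
            (a - l * cos θ * cos φ) * (a - l * cos θ * sin φ)) =
      l / 8 *
        (8 * a * (l ^ 2 + a ^ 2) * √(l ^ 2 - 2 * a ^ 2)
          - (l ^ 2 + a ^ 2) * (l ^ 2 + 5 * a ^ 2)
          + 2 * π * a ^ 2 * (3 * l ^ 2 - 4 * a * l + 3 * a ^ 2)
          + 24 * a ^ 3 * l * arccos (a ^ 2 / (l ^ 2 - a ^ 2))
          - 24 * a ^ 2 * (l ^ 2 + a ^ 2) * arccos (a / √(l ^ 2 - a ^ 2))) := by
  have hl : 0 < l := lt_trans (by positivity) h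
  have hlt : 2 * a ^ 2 < l ^ 2 := by
    simpa only [mul_pow, sq_sqrt zero_le_two] using pow_lt_pow_left₀ h (by positivity) two_ne_zero
  have hal : a / l ≤ 1 := (div_le_one hl).2 (by nlinarith)
  set d := √(l ^ 2 - 2 * a ^ 2) with hd_def
  have hd : 0 < d := sqrt_pos.2 (sub_pos.2 hlt)
  have hld : l ^ 2 = 2 * a ^ 2 + d ^ 2 := by rw [sq_sqrt (sub_pos.2 hlt).le]; ring
  have hsubst := integral_cos_mul_comp_mul_sin_mul_cos hl.le
    (α := arccos (√2 * a / l)) (β := arcsin (a / l))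
    ⟨by linarith [arccos_nonneg (√2 * a / l), pi_pos], arccos_le_pi_div_two.2 (by positivity)⟩
    (arcsin_mem_Icc _)
    (fun u r ↦ (a - u) * azimuthalIntegral a r)
  rw [mul_sin_arccos_div hl, mul_pow, sq_sqrt zero_le_two, ← hd_def,
    sin_arcsin (neg_one_lt_zero.le.trans (by positivity)) hal, mul_div_cancel₀ _ hl.ne',
    integral_sub_mul_azimuthalIntegral ha hd hl hld] at hsubst
  have hla : l ^ 2 - a ^ 2 = a ^ 2 + d ^ 2 := by linear_combination hld
  simp only [azimuthalIntegral, ← mul_assoc] at hsubst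
  rw [hla]
  linear_combination l * hsubst

theorem angular_integral_third_range (a : ℝ) (ha : 0 < a) (l : ℝ)
    (h1 : Real.sqrt 2 * a < l) (h2 : l < Real.sqrt 3 * a) :
    l ^ 2 *
      (∫ θ in Real.arccos (Real.sqrt 2 * a / l)..Real.arcsin (a / l),
        Real.cos θ * (a - l * Real.sin θ) *
          ∫ φ in Real.arccos (a / (l * Real.cos θ))..Real.arcsin (a / (l * Real.cos θ)),
            (a - l * Real.cos θ * Real.cos φ) * (a - l * Real.cos θ * Real.sin φ)) =
      l / 8 *
        (8 * a * (l ^ 2 + a ^ 2) * Real.sqrt (l ^ 2 - 2 * a ^ 2)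
          - (l ^ 2 + a ^ 2) * (l ^ 2 + 5 * a ^ 2)
          + 2 * π * a ^ 2 * (3 * l ^ 2 - 4 * a * l + 3 * a ^ 2)
          + 24 * a ^ 3 * l * Real.arccos (a ^ 2 / (l ^ 2 - a ^ 2))
          - 24 * a ^ 2 * (l ^ 2 + a ^ 2) * Real.arccos (a / Real.sqrt (l ^ 2 - a ^ 2))) :=
  angular_integral_third_range_general a ha l h1
end
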